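/- Let 2 ≤ p < ∞ and k ∈ ℕ. There exists C > 0, depending only on φ, p, k, such that for every admissible finite collection 𝓘 = {[a_m,b_m]}_{m=1}^N and every Schwartz function f, one has ‖ ( Σ_{m=1}^N |(f∗φ_m)^{(k)}(x)|² )^{1/2} ‖_{L^p(dx)} ≤ C ‖ f^{(k)} ‖_{L^p}. (Uniform boundedness of the family without rotations on the homogeneous Sobolev space Ẇ^p_k = Ḟ^k_{p2}.) -/

import Mathlib

open MeasureTheory Real Set Function
open scoped FourierTransform ENNReal NNReal

/-- `e2pi t = e^{2πit}`. -/
noncomputable def e2pi (t : ℝ) : ℂ := Complex.exp (2 * (Real.pi : ℂ) * Complex.I * (t : ℂ))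

/-- Convolution of two functions on `ℝ`. -/
noncomputable def conv (f g : ℝ → ℂ) (x : ℝ) : ℂ := ∫ t, f t * g (x - t)

/-- The function `φ_m` associated with the interval `[a,b]`: its Fourier transform is
`ξ ↦ 𝓕φ ((ξ - a)/(b - a))`; in space variables it is `x ↦ (b-a) e^{2πiax} φ((b-a)x)`. -/
noncomputable def phim (φ : ℝ → ℂ) (a b : ℝ) (x : ℝ) : ℂ :=
  ((b - a : ℝ) : ℂ) * e2pi (a * x) * φ ((b - a) * x)

/-- A finite collection of compact intervals `[a m, b m]` is admissible if the intervals are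
nondegenerate, pairwise disjoint, and none of them contains `0` in its interior. -/
def Admissible {N : ℕ} (a b : Fin N → ℝ) : Prop :=
  (∀ m, a m < b m) ∧ (∀ m, (0 : ℝ) ∉ Set.Ioo (a m) (b m)) ∧
    ∀ m m', m ≠ m' → Disjoint (Set.Icc (a m) (b m)) (Set.Icc (a m') (b m'))

/-- The rotated Rubio de Francia piece `g_m(x) = e^{-2πi a x} (f ∗ φ_m)(x)`. -/
noncomputable def rotConv (φ : ℝ → ℂ) (a b : ℝ) (f : ℝ → ℂ) (x : ℝ) : ℂ :=
  e2pi (-(a * x)) * conv f (phim φ a b) x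

/-!
Since `(f ∗ φ_m)^{(k)} = f^{(k)} ∗ φ_m`, it suffices to bound the square function of
`g = f^{(k)}`, and since `|f ∗ φ_m|` does not see a modulation, each piece may be moved to the
origin in frequency. The resulting functions are the coordinates of one Euclidean-valued `G`, whose
mean square oscillation on a ball is bounded by the maximal function `M(|g|²)` at any point of
the ball. The part of `g` near the ball is handled by Plancherel and the disjointness of the
intervals. For the far part, the increment of the `m`-th coordinate is the Fourier transform of a
kernel depending on the scale `b_m - a_m`, evaluated at the frequency `a_m`. Sobolev inequalities in
frequency (over the disjoint intervals) and in scale turn the sum over `m` into an integral over all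
frequencies and scales, to which Plancherel applies. The Fefferman–Stein good-`λ` inequality
passes from oscillations back to `|G|²`, and the maximal theorem in `L^{p/2}` concludes when
`p > 2`; `p = 2` is Plancherel again.
-/

section LayerCake

variable {α : Type*} [MeasurableSpace α] {μ : Measure α} {f g : α → ℝ≥0∞} {q : ℝ}

lemma lintegral_Ioi_rpow_eq_top (s : ℝ) :
    ∫⁻ t in Ioi (0 : ℝ), ENNReal.ofReal (t ^ s) = ∞ := by
  by_contra hfin
  have hmeas : AEStronglyMeasurable (fun t : ℝ ↦ t ^ s) (volume.restrict (Ioi 0)) := by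
    fun_prop
  have hnonneg : 0 ≤ᵐ[volume.restrict (Ioi 0)] fun t : ℝ ↦ t ^ s :=
    (ae_restrict_mem measurableSet_Ioi).mono fun t ht ↦ Real.rpow_nonneg (le_of_lt ht) s
  exact not_integrableOn_Ioi_rpow s
    ((lintegral_ofReal_ne_top_iff_integrable hmeas hnonneg).1 hfin)

theorem lintegral_rpow_eq_lintegral_meas_ofReal_lt_mul (hf : AEMeasurable f μ) (hq : 0 < q) :
    ∫⁻ x, f x ^ q ∂μ = ENNReal.ofReal q *
      ∫⁻ t in Ioi (0 : ℝ), μ {x | ENNReal.ofReal t < f x} * ENNReal.ofReal (t ^ (q - 1)) := by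
  by_cases hfin : ∀ᵐ x ∂μ, f x ≠ ∞
  · calc ∫⁻ x, f x ^ q ∂μ = ∫⁻ x, ENNReal.ofReal ((f x).toReal ^ q) ∂μ :=
          lintegral_congr_ae <| hfin.mono fun x hx ↦ by
            simp only
            rw [← ENNReal.ofReal_rpow_of_nonneg ENNReal.toReal_nonneg hq.le,
              ENNReal.ofReal_toReal hx]
      _ = _ := lintegral_rpow_eq_lintegral_meas_lt_mul μ
          (.of_forall fun _ ↦ ENNReal.toReal_nonneg) hf.ennreal_toReal hq
      _ = _ := by
          congr 1
          refine setLIntegral_congr_fun measurableSet_Ioi fun t ht ↦ ?_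
          congr 1
          exact measure_congr <| hfin.mono fun x hx ↦
            propext (ENNReal.ofReal_lt_iff_lt_toReal (le_of_lt ht) hx).symm
  · have htop : μ {x | f x = ∞} ≠ 0 := by simpa [ae_iff] using hfin
    have hle : μ {x | f x = ∞} * ∫⁻ t in Ioi (0 : ℝ), ENNReal.ofReal (t ^ (q - 1)) ≤
        ∫⁻ t in Ioi (0 : ℝ), μ {x | ENNReal.ofReal t < f x} * ENNReal.ofReal (t ^ (q - 1)) := by
      rw [← lintegral_const_mul _ (by fun_prop)]
      gcongr with t
      exact fun (hx : f _ = ∞) ↦ hx ▸ ENNReal.ofReal_lt_top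
    rw [lintegral_Ioi_rpow_eq_top, ENNReal.mul_top htop, top_le_iff] at hle
    rw [hle, ENNReal.mul_top (by simpa using hq)]
    refine lintegral_eq_top_of_measure_eq_top_ne_zero (hf.pow_const q) ?_
    simpa [ENNReal.rpow_eq_top_iff, hq, hq.not_gt] using htop

lemma measurable_meas_ofReal_lt_mul_rpow (μ : Measure α) (f : α → ℝ≥0∞) (s : ℝ) :
    Measurable fun t : ℝ ↦ μ {x | ENNReal.ofReal t < f x} * ENNReal.ofReal (t ^ s) := by
  have hanti : Antitone fun t : ℝ ↦ μ {x | ENNReal.ofReal t < f x} := fun _ _ hst ↦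
    measure_mono fun _ hx ↦ (ENNReal.ofReal_le_ofReal hst).trans_lt hx
  exact hanti.measurable.mul (by fun_prop)

theorem lintegral_rpow_le_of_truncated_weak_type (hf : Measurable f) (hg : AEMeasurable g μ)
    (hq : 1 < q) {K : ℝ≥0∞}
    (hweak : ∀ t : ℝ, 0 < t → ENNReal.ofReal t * μ {x | ENNReal.ofReal t < g x} ≤
      K * ∫⁻ x in {x | ENNReal.ofReal t < 2 * f x}, f x ∂μ) :
    ∫⁻ x, g x ^ q ∂μ ≤ K * ENNReal.ofReal (q / (q - 1)) * 2 ^ (q - 1) * ∫⁻ x, f x ^ q ∂μ := by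
  have hq₀ : 0 < q - 1 := sub_pos.2 hq
  have hlevel (t : ℝ) (ht : 0 < t) :
      μ {x | ENNReal.ofReal t < g x} * ENNReal.ofReal (t ^ (q - 1)) ≤
        K * (μ.withDensity f {x | ENNReal.ofReal t < 2 * f x} *
          ENNReal.ofReal (t ^ (q - 1 - 1))) := by
    rw [withDensity_apply _ (measurableSet_lt measurable_const (hf.const_mul 2)), ← mul_assoc]
    convert! mul_le_mul_left (hweak t ht) (ENNReal.ofReal (t ^ (q - 1 - 1))) using 1
    rw [mul_right_comm, ← ENNReal.ofReal_mul ht.le, mul_comm, ← Real.rpow_one_add' ht.le]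
    all_goals ring_nf
    linarith
  calc ∫⁻ x, g x ^ q ∂μ
      = ENNReal.ofReal q * ∫⁻ t in Ioi (0 : ℝ),
          μ {x | ENNReal.ofReal t < g x} * ENNReal.ofReal (t ^ (q - 1)) :=
        lintegral_rpow_eq_lintegral_meas_ofReal_lt_mul hg (by linarith)
    _ ≤ ENNReal.ofReal q * (K * ∫⁻ t in Ioi (0 : ℝ),
          μ.withDensity f {x | ENNReal.ofReal t < 2 * f x} *
            ENNReal.ofReal (t ^ (q - 1 - 1))) := by
        gcongr ENNReal.ofReal q * ?_
        rw [← lintegral_const_mul _ (measurable_meas_ofReal_lt_mul_rpow _ _ _)]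
        exact setLIntegral_mono' measurableSet_Ioi hlevel
    _ = K * ENNReal.ofReal (q / (q - 1)) *
          ∫⁻ x, (2 * f x) ^ (q - 1) ∂μ.withDensity f := by
        rw [lintegral_rpow_eq_lintegral_meas_ofReal_lt_mul (by fun_prop) hq₀,
          mul_assoc K, ← mul_assoc (ENNReal.ofReal (q / (q - 1))),
          ← ENNReal.ofReal_mul (by positivity), div_mul_cancel₀ q hq₀.ne', mul_left_comm]
    _ = K * ENNReal.ofReal (q / (q - 1)) * (2 ^ (q - 1) * ∫⁻ x, f x ^ q ∂μ) := by
        rw [lintegral_withDensity_eq_lintegral_mul _ hf (by fun_prop),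
          ← lintegral_const_mul (2 ^ (q - 1)) (by fun_prop)]
        congr! 3 with x
        rw [Pi.mul_apply, ENNReal.mul_rpow_of_nonneg _ _ hq₀.le, mul_left_comm]
        congr 1
        rw [← add_sub_cancel 1 q,
          ENNReal.rpow_add_of_nonneg _ _ zero_le_one (by simpa using hq₀.le),
          ENNReal.rpow_one, add_sub_cancel]
    _ = K * ENNReal.ofReal (q / (q - 1)) * 2 ^ (q - 1) * ∫⁻ x, f x ^ q ∂μ := (mul_assoc _ _ _).symm

lemma lintegral_rpow_eq_mul_lintegral_div_rpow (f : α → ℝ≥0∞) (hq : 0 ≤ q) {u : ℝ≥0∞}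
    (hu₀ : u ≠ 0) (hu : u ≠ ∞) : ∫⁻ x, f x ^ q ∂μ = u ^ q * ∫⁻ x, (f x / u) ^ q ∂μ := by
  rw [← lintegral_const_mul' _ _ (ENNReal.rpow_ne_top_of_nonneg hq hu)]
  simp_rw [← ENNReal.mul_rpow_of_nonneg _ _ hq, ENNReal.mul_div_cancel hu₀ hu]

lemma le_two_mul_of_le_inv_two_mul_add {x y : ℝ≥0∞} (hx : x ≠ ∞) (h : x ≤ 2⁻¹ * x + y) :
    x ≤ 2 * y := by
  have hsplit : 2⁻¹ * x + 2⁻¹ * x = x := by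
    rw [← add_mul, ENNReal.inv_two_add_inv_two, one_mul]
  have hhalf : 2⁻¹ * x ≤ y := by
    rw [← ENNReal.add_le_add_iff_left (a := 2⁻¹ * x) (ENNReal.mul_ne_top (by simp) hx), hsplit]
    exact h
  calc x = 2 * (2⁻¹ * x) := by rw [two_mul, hsplit]
    _ ≤ 2 * y := by gcongr

theorem lintegral_rpow_le_of_good_lambda (hf : AEMeasurable f μ) (hg : AEMeasurable g μ)
    (hq : 0 < q) (hfin : ∫⁻ x, f x ^ q ∂μ ≠ ∞) {L γ ε : ℝ≥0∞} (hL₀ : L ≠ 0) (hL : L ≠ ∞)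
    (hγ₀ : γ ≠ 0) (hγ : γ ≠ ∞) (hε : L ^ q * ε ≤ 2⁻¹)
    (hgood : ∀ t : ℝ, 0 < t → μ {x | L * ENNReal.ofReal t < f x} ≤
      ε * μ {x | ENNReal.ofReal t < f x} + μ {x | γ * ENNReal.ofReal t < g x}) :
    ∫⁻ x, f x ^ q ∂μ ≤ 2 * ((L / γ) ^ q * ∫⁻ x, g x ^ q ∂μ) := by
  have hlevel (h : α → ℝ≥0∞) {u : ℝ≥0∞} (hu₀ : u ≠ 0) (hu : u ≠ ∞) (t : ℝ) :
      {x | ENNReal.ofReal t < h x / u} = {x | u * ENNReal.ofReal t < h x} := by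
    ext x
    rw [mem_ofPred_eq, ENNReal.lt_div_iff_mul_lt (.inl hu₀) (.inl hu), mul_comm]
    rfl
  have hscaled : ∫⁻ x, (f x / L) ^ q ∂μ ≤ ε * ∫⁻ x, f x ^ q ∂μ + ∫⁻ x, (g x / γ) ^ q ∂μ := by
    rw [lintegral_rpow_eq_lintegral_meas_ofReal_lt_mul (hf.div_const _) hq,
      lintegral_rpow_eq_lintegral_meas_ofReal_lt_mul hf hq,
      lintegral_rpow_eq_lintegral_meas_ofReal_lt_mul (hg.div_const _) hq, mul_left_comm,
      ← mul_add]
    gcongr ENNReal.ofReal q * ?_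
    rw [← lintegral_const_mul _ (measurable_meas_ofReal_lt_mul_rpow ..),
      ← lintegral_add_right _ (measurable_meas_ofReal_lt_mul_rpow ..)]
    refine setLIntegral_mono' measurableSet_Ioi fun t ht ↦ ?_
    rw [hlevel f hL₀ hL, hlevel g hγ₀ hγ, ← mul_assoc, ← add_mul]
    gcongr
    exact hgood t ht
  apply le_two_mul_of_le_inv_two_mul_add hfin
  calc ∫⁻ x, f x ^ q ∂μ = L ^ q * ∫⁻ x, (f x / L) ^ q ∂μ :=
        lintegral_rpow_eq_mul_lintegral_div_rpow f hq.le hL₀ hL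
    _ ≤ L ^ q * (ε * ∫⁻ x, f x ^ q ∂μ + ∫⁻ x, (g x / γ) ^ q ∂μ) := by gcongr
    _ = L ^ q * ε * ∫⁻ x, f x ^ q ∂μ + (L / γ) ^ q * (γ ^ q * ∫⁻ x, (g x / γ) ^ q ∂μ) := by
        rw [mul_add, ← mul_assoc, ← mul_assoc ((L / γ) ^ q),
          ← ENNReal.mul_rpow_of_nonneg _ _ hq.le, ENNReal.div_mul_cancel hγ₀ hγ]
    _ ≤ 2⁻¹ * ∫⁻ x, f x ^ q ∂μ + (L / γ) ^ q * ∫⁻ x, g x ^ q ∂μ := by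
        rw [← lintegral_rpow_eq_mul_lintegral_div_rpow g hq.le hγ₀ hγ]
        gcongr

end LayerCake

section SquareSum

lemma add_sq_le_two_mul_add (s t : ℝ≥0∞) : (s + t) ^ 2 ≤ 2 * s ^ 2 + 2 * t ^ 2 := by
  have h := ENNReal.rpow_add_le_mul_rpow_add_rpow s t (p := 2) (by norm_num)
  norm_num at h
  rw [← mul_add]
  exact mod_cast h

lemma enorm_add_sq_le {F : Type*} [NormedAddCommGroup F] (u v : F) :
    ‖u + v‖ₑ ^ 2 ≤ 2 * ‖u‖ₑ ^ 2 + 2 * ‖v‖ₑ ^ 2 :=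
  (pow_le_pow_left' (enorm_add_le u v) 2).trans (add_sq_le_two_mul_add _ _)

end SquareSum

section MaximalFunction

open Metric

variable {X : Type*} [PseudoMetricSpace X] [MeasurableSpace X]

/-- The uncentered Hardy–Littlewood maximal function of `f` with respect to `μ`. The condition
`x ∈ ball c r` forces `0 < r`. -/
noncomputable def maximalFunction (μ : Measure X) (f : X → ℝ≥0∞) (x : X) : ℝ≥0∞ :=
  ⨆ (c : X) (r : ℝ) (_ : x ∈ ball c r), ⨍⁻ y in ball c r, f y ∂μ

variable {μ : Measure X}

lemma maximalFunction_mono {f g : X → ℝ≥0∞} (hfg : f ≤ g) :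
    maximalFunction μ f ≤ maximalFunction μ g := fun x ↦ by
  unfold maximalFunction
  exact iSup₂_mono fun c r ↦ iSup_mono fun _ ↦ laverage_mono_ae (.of_forall hfg)

theorem measure_le_mul_of_forall_exists_ball [TopologicalSpace.SeparableSpace X]
    [OpensMeasurableSpace X]
    {ν ρ : Measure X} {s t : Set X} {K : ℝ≥0∞} {R : ℝ}
    (h : ∀ x ∈ s, ∃ c r, x ∈ ball c r ∧ r ≤ R ∧ ball c r ⊆ t ∧
      ν (ball c (5 * r)) ≤ K * ρ (ball c r)) :
    ν s ≤ K * ρ t := by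
  choose! c r hx hR ht hν using h
  obtain ⟨u, hus, hdisj, hcover⟩ := Vitali.exists_disjoint_subfamily_covering_enlargement_ball
    s c r R hR 5 (by norm_num)
  have hu : u.Countable := hdisj.countable_of_isOpen (fun _ _ ↦ isOpen_ball)
    fun x hxu ↦ ⟨x, hx x (hus hxu)⟩
  calc ν s ≤ ν (⋃ x ∈ u, ball (c x) (5 * r x)) := measure_mono fun x hxs ↦ by
        obtain ⟨y, hyu, hxy⟩ := hcover x hxs
        exact mem_biUnion hyu (hxy (hx x hxs))
    _ ≤ ∑' x : u, ν (ball (c x) (5 * r x)) := measure_biUnion_le ν hu _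
    _ ≤ ∑' x : u, K * ρ (ball (c x) (r x)) := ENNReal.tsum_le_tsum fun x ↦ hν x (hus x.2)
    _ = K * ρ (⋃ x ∈ u, ball (c x) (r x)) := by
        rw [ENNReal.tsum_mul_left, measure_biUnion hu hdisj fun _ _ ↦ measurableSet_ball]
    _ ≤ K * ρ t := by
        gcongr
        exact iUnion₂_subset fun x hxu ↦ ht x (hus hxu)

variable [ProperSpace X] [μ.IsOpenPosMeasure] [IsFiniteMeasureOnCompacts μ]

lemma lt_maximalFunction_iff {f : X → ℝ≥0∞} {x : X} {l : ℝ≥0∞} :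
    l < maximalFunction μ f x ↔
      ∃ c r, x ∈ ball c r ∧ l * μ (ball c r) < ∫⁻ y in ball c r, f y ∂μ := by
  simp only [maximalFunction, lt_iSup_iff, exists_prop]
  refine exists₂_congr fun c r ↦ and_congr_right fun hx ↦ ?_
  rw [setLAverage_eq, ENNReal.lt_div_iff_mul_lt
    (.inl (measure_ball_pos μ c (pos_of_mem_ball hx)).ne') (.inl measure_ball_lt_top.ne)]

lemma setLIntegral_ball_le_maximalFunction_mul (f : X → ℝ≥0∞) {x c : X} {r : ℝ}
    (hx : x ∈ ball c r) :
    ∫⁻ y in ball c r, f y ∂μ ≤ maximalFunction μ f x * μ (ball c r) :=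
  le_of_not_gt fun h ↦ lt_irrefl _ (lt_maximalFunction_iff.2 ⟨c, r, hx, h⟩)

lemma isOpen_lt_maximalFunction (f : X → ℝ≥0∞) (l : ℝ≥0∞) :
    IsOpen {x | l < maximalFunction μ f x} :=
  isOpen_iff_mem_nhds.2 fun _ hx ↦ by
    obtain ⟨c, r, hxc, h⟩ := lt_maximalFunction_iff.1 hx
    filter_upwards [isOpen_ball.mem_nhds hxc] with y hy
    exact lt_maximalFunction_iff.2 ⟨c, r, hy, h⟩

lemma measurable_maximalFunction [OpensMeasurableSpace X] (f : X → ℝ≥0∞) :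
    Measurable (maximalFunction μ f) :=
  measurable_of_Ioi fun l ↦ (isOpen_lt_maximalFunction f l).measurableSet

lemma maximalFunction_add_const_le (f : X → ℝ≥0∞) (a : ℝ≥0∞) (x : X) :
    maximalFunction μ (fun y ↦ f y + a) x ≤ maximalFunction μ f x + a := by
  refine le_of_not_gt fun h ↦ ?_
  obtain ⟨c, r, hx, hlt⟩ := lt_maximalFunction_iff.1 h
  rw [lintegral_add_right _ measurable_const, setLIntegral_const, add_mul] at hlt
  exact hlt.not_ge (by gcongr; exact setLIntegral_ball_le_maximalFunction_mul f hx)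

lemma le_maximalFunction [OpensMeasurableSpace X] {f : X → ℝ≥0∞} (hf : LowerSemicontinuous f)
    (x : X) : f x ≤ maximalFunction μ f x := by
  refine le_of_forall_lt fun l hl ↦ ?_
  obtain ⟨m, hlm, hm⟩ := exists_between hl
  obtain ⟨r, hr, hball⟩ := Metric.mem_nhds_iff.1 (hf x m hm)
  refine lt_maximalFunction_iff.2 ⟨x, r, mem_ball_self hr, ?_⟩
  calc l * μ (ball x r) < m * μ (ball x r) :=
        ENNReal.mul_lt_mul_left (measure_ball_pos μ x hr).ne' measure_ball_lt_top.ne hlm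
    _ = ∫⁻ _ in ball x r, m ∂μ := (setLIntegral_const _ _).symm
    _ ≤ ∫⁻ y in ball x r, f y ∂μ := setLIntegral_mono' measurableSet_ball fun y hy ↦
        le_of_lt (hball hy)

end MaximalFunction

section HardyLittlewood

open Metric Module

variable {E : Type*} [NormedAddCommGroup E] [NormedSpace ℝ E] [FiniteDimensional ℝ E]
  [MeasurableSpace E] [BorelSpace E] (μ : Measure E) [μ.IsAddHaarMeasure]

lemma measure_ball_mul_radius {K : ℝ} (hK : 0 < K) (c : E) (r : ℝ) :
    μ (ball c (K * r)) = ENNReal.ofReal K ^ finrank ℝ E * μ (ball c r) := by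
  rw [Measure.addHaar_ball_mul_of_pos μ c hK, ENNReal.ofReal_pow hK.le,
    ← Measure.addHaar_ball_center μ c]

variable {μ}

lemma exists_radius_le_of_mul_measure_ball_le [Nontrivial E] {l A : ℝ≥0∞} (hl : l ≠ 0)
    (hA : A ≠ ∞) : ∃ R : ℝ, ∀ (c : E) (r : ℝ), l * μ (ball c r) ≤ A → r ≤ R := by
  have hunit : l * μ (ball (0 : E) 1) ≠ 0 :=
    mul_ne_zero hl (measure_ball_pos μ 0 one_pos).ne'
  refine ⟨1 + (A / (l * μ (ball (0 : E) 1))).toReal, fun c r hle ↦ ?_⟩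
  rcases le_total r 1 with hr | hr
  · linarith [ENNReal.toReal_nonneg (a := A / (l * μ (ball (0 : E) 1)))]
  rw [Measure.addHaar_ball_of_pos μ c (one_pos.trans_le hr), mul_left_comm,
    ← ENNReal.le_div_iff_mul_le (.inl hunit) (.inr hA)] at hle
  have hpow := (ENNReal.ofReal_le_iff_le_toReal (ENNReal.div_ne_top hA hunit)).1 hle
  linarith [le_self_pow₀ hr (finrank_pos (R := ℝ) (M := E)).ne']

theorem mul_meas_lt_maximalFunction_le [Nontrivial E] (f : E → ℝ≥0∞) (l : ℝ≥0∞) :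
    l * μ {x | l < maximalFunction μ f x} ≤ 5 ^ finrank ℝ E * ∫⁻ x, f x ∂μ := by
  rcases eq_or_ne l 0 with rfl | hl
  · simp
  rcases eq_or_ne (∫⁻ x, f x ∂μ) ∞ with hf | hf
  · simp [hf]
  obtain ⟨R, hR⟩ := exists_radius_le_of_mul_measure_ball_le (μ := μ) hl hf
  rw [← smul_eq_mul, ← Measure.smul_apply, ← setLIntegral_univ, ← withDensity_apply f .univ]
  refine measure_le_mul_of_forall_exists_ball (R := R) fun x hx ↦ ?_
  obtain ⟨c, r, hxc, hlt⟩ := lt_maximalFunction_iff.1 hx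
  refine ⟨c, r, hxc, hR c r (hlt.le.trans (setLIntegral_le_lintegral _ _)), subset_univ _, ?_⟩
  rw [withDensity_apply _ measurableSet_ball, Measure.smul_apply, smul_eq_mul,
    measure_ball_mul_radius μ (by norm_num), mul_left_comm, ENNReal.ofReal_ofNat]
  gcongr

theorem mul_meas_two_mul_lt_maximalFunction_le [Nontrivial E] {f : E → ℝ≥0∞} (hf : Measurable f)
    (l : ℝ≥0∞) :
    l * μ {x | 2 * l < maximalFunction μ f x} ≤
      5 ^ finrank ℝ E * ∫⁻ x in {x | l < f x}, f x ∂μ := by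
  have htrunc : f ≤ fun x ↦ {x | l < f x}.indicator f x + l := fun x ↦ by
    by_cases hx : l < f x
    · simp [hx]
    · simpa [hx] using not_lt.1 hx
  rw [← lintegral_indicator (measurableSet_lt measurable_const hf)]
  refine le_trans ?_ (mul_meas_lt_maximalFunction_le _ l)
  gcongr l * μ ?_
  intro x hx
  have hx' := lt_of_lt_of_le hx
    ((maximalFunction_mono htrunc x).trans (maximalFunction_add_const_le ..))
  rw [two_mul] at hx'
  exact lt_of_add_lt_add_right hx'

theorem lintegral_maximalFunction_rpow_le [Nontrivial E] {q : ℝ} (hq : 1 < q) {f : E → ℝ≥0∞}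
    (hf : Measurable f) :
    ∫⁻ x, maximalFunction μ f x ^ q ∂μ ≤
      2 * 5 ^ finrank ℝ E * ENNReal.ofReal (q / (q - 1)) * 2 ^ (q - 1) * ∫⁻ x, f x ^ q ∂μ := by
  refine lintegral_rpow_le_of_truncated_weak_type hf
    (measurable_maximalFunction f).aemeasurable hq fun t _ ↦ ?_
  obtain ⟨l, hl⟩ : ∃ l, ENNReal.ofReal t = 2 * l :=
    ⟨ENNReal.ofReal t / 2, (ENNReal.mul_div_cancel (by simp) (by simp)).symm⟩
  simp_rw [hl, ENNReal.mul_lt_mul_iff_right (a := 2) (by simp) (by simp), mul_assoc]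
  gcongr 2 * ?_
  exact mul_meas_two_mul_lt_maximalFunction_le (μ := μ) hf l

end HardyLittlewood

section WeightedTail

open Metric Module

variable {E : Type*} [NormedAddCommGroup E] [NormedSpace ℝ E] [FiniteDimensional ℝ E]
  [MeasurableSpace E] [BorelSpace E] {μ : Measure E} [μ.IsAddHaarMeasure]

lemma setLIntegral_ball_two_mul_diff_ball_mul_inv_le (f : E → ℝ≥0∞) {c y : E} {R : ℝ} (hR : 0 < R)
    (hy : y ∈ ball c (2 * R)) :
    ∫⁻ t in ball c (2 * R) \ ball c R,
        f t * ENNReal.ofReal (dist t c ^ (finrank ℝ E + 1))⁻¹ ∂μ ≤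
      ENNReal.ofReal R⁻¹ * (2 ^ finrank ℝ E * μ (ball 0 1) * maximalFunction μ f y) := by
  set n := finrank ℝ E
  have hscale : ENNReal.ofReal (R ^ (n + 1))⁻¹ * ENNReal.ofReal (R ^ n) = ENNReal.ofReal R⁻¹ := by
    rw [← ENNReal.ofReal_mul (by positivity)]
    congr 1
    field_simp
    exact (pow_succ R n).symm
  calc ∫⁻ t in ball c (2 * R) \ ball c R, f t * ENNReal.ofReal (dist t c ^ (n + 1))⁻¹ ∂μ
      ≤ ∫⁻ t in ball c (2 * R) \ ball c R, f t * ENNReal.ofReal (R ^ (n + 1))⁻¹ ∂μ := by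
        refine setLIntegral_mono' (measurableSet_ball.diff measurableSet_ball) fun t ht ↦ ?_
        gcongr
        exact not_lt.1 ht.2
    _ ≤ (∫⁻ t in ball c (2 * R), f t ∂μ) * ENNReal.ofReal (R ^ (n + 1))⁻¹ := by
        rw [lintegral_mul_const' _ _ ENNReal.ofReal_ne_top]
        gcongr
        exact sdiff_subset
    _ ≤ maximalFunction μ f y * μ (ball c (2 * R)) * ENNReal.ofReal (R ^ (n + 1))⁻¹ := by
        gcongr
        exact setLIntegral_ball_le_maximalFunction_mul f hy
    _ = ENNReal.ofReal R⁻¹ * (2 ^ n * μ (ball 0 1) * maximalFunction μ f y) := by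
        rw [measure_ball_mul_radius μ two_pos, ENNReal.ofReal_ofNat,
          Measure.addHaar_ball_of_pos μ c hR, ← hscale]
        ring

theorem setLIntegral_compl_ball_mul_inv_le (f : E → ℝ≥0∞) {c y : E} {r : ℝ} (hy : y ∈ ball c r) :
    ∫⁻ t in (ball c r)ᶜ, f t * ENNReal.ofReal (dist t c ^ (finrank ℝ E + 1))⁻¹ ∂μ ≤
      ENNReal.ofReal r⁻¹ * (2 ^ (finrank ℝ E + 1) * μ (ball 0 1) * maximalFunction μ f y) := by
  have hr : 0 < r := pos_of_mem_ball hy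
  set shell : ℕ → Set E := fun j ↦ ball c (2 * (2 ^ j * r)) \ ball c (2 ^ j * r)
  have hcover : (ball c r)ᶜ ⊆ ⋃ j, shell j := fun t ht ↦ by
    obtain ⟨j, hj, hj'⟩ := exists_nat_pow_near ((one_le_div hr).2 (not_lt.1 ht)) one_lt_two
    rw [le_div_iff₀ hr] at hj
    rw [div_lt_iff₀ hr, pow_succ', mul_assoc] at hj'
    exact mem_iUnion.2 ⟨j, hj', not_lt.2 hj⟩
  have hshell (j : ℕ) : y ∈ ball c (2 * (2 ^ j * r)) := by
    refine ball_subset_ball ?_ hy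
    nlinarith [one_le_pow₀ (M₀ := ℝ) one_le_two (n := j)]
  have hgeom (j : ℕ) : ENNReal.ofReal (2 ^ j * r)⁻¹ = ENNReal.ofReal r⁻¹ * 2⁻¹ ^ j := by
    rw [mul_inv_rev, ENNReal.ofReal_mul (by positivity), ENNReal.ofReal_inv_of_pos (by positivity),
      ENNReal.ofReal_inv_of_pos (by positivity), ENNReal.ofReal_pow zero_le_two,
      ENNReal.ofReal_ofNat, ENNReal.inv_pow]
  refine ((lintegral_mono_set hcover).trans (lintegral_iUnion_le _ _)).trans ?_
  refine (ENNReal.tsum_le_tsum fun j ↦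
    setLIntegral_ball_two_mul_diff_ball_mul_inv_le f (by positivity) (hshell j)).trans_eq ?_
  simp_rw [hgeom]
  rw [ENNReal.tsum_mul_right, ENNReal.tsum_mul_left, ENNReal.tsum_geometric,
    ENNReal.one_sub_inv_two, inv_inv]
  ring

end WeightedTail

section FeffermanStein

open Metric Module

variable {F : Type*} [NormedAddCommGroup F]

lemma enorm_sq_le_of_setLIntegral_le {α : Type*} [MeasurableSpace α] {μ : Measure α} {s : Set α}
    (hs₀ : μ s ≠ 0) (hs : μ s ≠ ∞) {G : α → F} (hG : StronglyMeasurable G) {v : F} {l : ℝ≥0∞}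
    (hGl : ∫⁻ x in s, ‖G x‖ₑ ^ 2 ∂μ ≤ l * μ s)
    (hvl : ∫⁻ x in s, ‖G x - v‖ₑ ^ 2 ∂μ ≤ l * μ s) : ‖v‖ₑ ^ 2 ≤ 4 * l := by
  have hpt (x : α) : ‖v‖ₑ ^ 2 ≤ 2 * ‖G x‖ₑ ^ 2 + 2 * ‖G x - v‖ₑ ^ 2 := by
    simpa [enorm_sub_rev v] using enorm_add_sq_le (G x) (v - G x)
  refine (ENNReal.mul_le_mul_iff_left hs₀ hs).1 ?_
  calc ‖v‖ₑ ^ 2 * μ s = ∫⁻ _ in s, ‖v‖ₑ ^ 2 ∂μ := (setLIntegral_const _ _).symm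
    _ ≤ ∫⁻ x in s, (2 * ‖G x‖ₑ ^ 2 + 2 * ‖G x - v‖ₑ ^ 2) ∂μ := lintegral_mono hpt
    _ = 2 * ∫⁻ x in s, ‖G x‖ₑ ^ 2 ∂μ + 2 * ∫⁻ x in s, ‖G x - v‖ₑ ^ 2 ∂μ := by
        rw [lintegral_add_left ((hG.enorm.pow_const 2).const_mul 2),
          lintegral_const_mul' _ _ (by simp), lintegral_const_mul' _ _ (by simp)]
    _ ≤ 2 * (l * μ s) + 2 * (l * μ s) := by gcongr
    _ = 4 * l * μ s := by ring

variable {E : Type*} [NormedAddCommGroup E] [NormedSpace ℝ E] [FiniteDimensional ℝ E]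
  [MeasurableSpace E] [BorelSpace E] {μ : Measure E}

/-- The quadratic mean oscillation of `G` over every ball, about a suitable center `v`, is bounded
by the values of `h` on that ball. -/
def MeanSqOscillationLE (μ : Measure E) (G : E → F) (h : E → ℝ≥0∞) : Prop :=
  ∀ (c : E) (r : ℝ), 0 < r → ∃ v : F, ∀ y ∈ ball c r,
    ∫⁻ x in ball c r, ‖G x - v‖ₑ ^ 2 ∂μ ≤ μ (ball c r) * h y

variable [μ.IsAddHaarMeasure] {f : E → ℝ≥0∞} {l : ℝ≥0∞}

lemma exists_ball_of_lt_maximalFunction [Nontrivial E] (hf : ∫⁻ x, f x ∂μ ≠ ∞) (hl : l ≠ 0)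
    {x : E} (hx : l < maximalFunction μ f x) :
    ∃ c r, x ∈ ball c r ∧ l * μ (ball c r) < ∫⁻ y in ball c r, f y ∂μ ∧
      ∀ c' r', 2 * r ≤ r' → x ∈ ball c' r' →
        ∫⁻ y in ball c' r', f y ∂μ ≤ l * μ (ball c' r') := by
  set T : Set ℝ := {r | ∃ c, x ∈ ball c r ∧ l * μ (ball c r) < ∫⁻ y in ball c r, f y ∂μ}
  obtain ⟨R, hR⟩ := exists_radius_le_of_mul_measure_ball_le (μ := μ) hl hf
  have hbdd : BddAbove T := ⟨R, fun r ⟨c, _, hlt⟩ ↦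
    hR c r (hlt.le.trans (setLIntegral_le_lintegral _ _))⟩
  obtain ⟨c₀, r₀, hx₀, hlt₀⟩ := lt_maximalFunction_iff.1 hx
  have hT₀ : r₀ ∈ T := ⟨c₀, hx₀, hlt₀⟩
  have hsup : 0 < sSup T := (pos_of_mem_ball hx₀).trans_le (le_csSup hbdd hT₀)
  obtain ⟨r, ⟨c, hxc, hlt⟩, hr⟩ := exists_lt_of_lt_csSup ⟨r₀, hT₀⟩ (half_lt_self hsup)
  refine ⟨c, r, hxc, hlt, fun c' r' hr' hxc' ↦ le_of_not_gt fun hlt' ↦ ?_⟩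
  linarith [le_csSup hbdd (show r' ∈ T from ⟨c', hxc', hlt'⟩)]

/-- Large values of the maximal function inside `ball c (5 * r)` come from balls of radius less
than `2 * r`: a larger ball, enlarged to contain `x`, would be charged by `hmax`. -/
lemma lt_maximalFunction_indicator {x c : E} {r : ℝ} (hx : x ∈ ball c r)
    (hmax : ∀ c' r', 2 * r ≤ r' → x ∈ ball c' r' →
      ∫⁻ y in ball c' r', f y ∂μ ≤ l * μ (ball c' r'))
    {y : E} (hy : y ∈ ball c (5 * r)) {s : ℝ≥0∞} (hs : 4 ^ finrank ℝ E * l ≤ s)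
    (hys : s < maximalFunction μ f y) :
    s < maximalFunction μ ((ball c (10 * r)).indicator f) y := by
  obtain ⟨c', r', hyc', hlt⟩ := lt_maximalFunction_iff.1 hys
  have hr : 0 < r := pos_of_mem_ball hx
  rw [mem_ball] at hx hy hyc'
  have hr' : r' < 2 * r := by
    by_contra! hr'
    have hxc' : x ∈ ball c' (4 * r') := by
      rw [mem_ball]
      linarith [dist_triangle4_right x y c c', dist_triangle_right x y c, dist_triangle x y c']
    refine hlt.not_ge ?_
    calc ∫⁻ z in ball c' r', f z ∂μ ≤ ∫⁻ z in ball c' (4 * r'), f z ∂μ :=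
          lintegral_mono_set (ball_subset_ball (by linarith [pos_of_mem_ball hyc']))
      _ ≤ l * μ (ball c' (4 * r')) :=
          hmax _ _ (by linarith [pos_of_mem_ball hyc']) hxc'
      _ = 4 ^ finrank ℝ E * l * μ (ball c' r') := by
          rw [measure_ball_mul_radius μ (by norm_num), ENNReal.ofReal_ofNat]
          ring
      _ ≤ s * μ (ball c' r') := by gcongr
  have hsub : ball c' r' ⊆ ball c (10 * r) :=
    ball_subset_ball' (by linarith [dist_triangle_left c' c y])
  refine lt_maximalFunction_iff.2 ⟨c', r', hyc', ?_⟩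
  rwa [setLIntegral_congr_fun measurableSet_ball fun z hz ↦ indicator_of_mem (hsub hz) f]

/-- Near a maximal ball, `G` is within `O(l)` of its center `v` on average, so that large values of
the maximal function of `‖G‖ₑ ^ 2` are large values of the one of the oscillation `‖G - v‖ₑ ^ 2`. -/
lemma lt_maximalFunction_indicator_sub {G : E → F} {x c : E} {r : ℝ} (hx : x ∈ ball c r)
    (hmax : ∀ c' r', 2 * r ≤ r' → x ∈ ball c' r' →
      ∫⁻ y in ball c' r', ‖G y‖ₑ ^ 2 ∂μ ≤ l * μ (ball c' r'))
    {v : F} (hv : ‖v‖ₑ ^ 2 ≤ 4 * l) {y : E} (hy : y ∈ ball c (5 * r))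
    (hly : 4 ^ finrank ℝ E * (16 * l) < maximalFunction μ (‖G ·‖ₑ ^ 2) y) :
    8 * l < maximalFunction μ ((ball c (10 * r)).indicator fun z ↦ 2 * ‖G z - v‖ₑ ^ 2) y := by
  set B := ball c (10 * r)
  set W : E → ℝ≥0∞ := B.indicator fun z ↦ 2 * ‖G z - v‖ₑ ^ 2
  have hle : B.indicator (‖G ·‖ₑ ^ 2) ≤ fun z ↦ W z + 2 * ‖v‖ₑ ^ 2 := fun z ↦ by
    by_cases hz : z ∈ B
    · simpa [W, hz] using enorm_add_sq_le (G z - v) v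
    · simp [hz]
  have hloc := lt_maximalFunction_indicator hx hmax hy
    (by gcongr; exact le_mul_of_one_le_left' (by norm_num)) hly
  refine lt_of_add_lt_add_right (a := 8 * l) ?_
  calc 8 * l + 8 * l = 16 * l := by ring
    _ ≤ 4 ^ finrank ℝ E * (16 * l) := le_mul_of_one_le_left' (one_le_pow₀ (by norm_num))
    _ < maximalFunction μ (B.indicator (‖G ·‖ₑ ^ 2)) y := hloc
    _ ≤ maximalFunction μ (fun z ↦ W z + 2 * ‖v‖ₑ ^ 2) y := maximalFunction_mono hle y
    _ ≤ maximalFunction μ W y + 2 * ‖v‖ₑ ^ 2 := maximalFunction_add_const_le W _ y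
    _ ≤ maximalFunction μ W y + 2 * (4 * l) := by gcongr
    _ = maximalFunction μ W y + 8 * l := by ring

lemma measure_inter_ball_le_of_meanSqOscillationLE [Nontrivial E] {G : E → F} {h : E → ℝ≥0∞}
    (hG : StronglyMeasurable G) (hosc : MeanSqOscillationLE μ G h) (hl₀ : l ≠ 0) (hl : l ≠ ∞)
    {γ : ℝ≥0∞} (hγ : γ ≤ 1) {x c : E} {r : ℝ} (hx : x ∈ ball c r)
    (hmax : ∀ c' r', 2 * r ≤ r' → x ∈ ball c' r' →
      ∫⁻ y in ball c' r', ‖G y‖ₑ ^ 2 ∂μ ≤ l * μ (ball c' r')) :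
    μ (ball c (5 * r) ∩ {y | 4 ^ finrank ℝ E * (16 * l) < maximalFunction μ (‖G ·‖ₑ ^ 2) y ∧
      h y ≤ γ * l}) ≤ 50 ^ finrank ℝ E * γ * μ (ball c r) := by
  have hr : 0 < r := pos_of_mem_ball hx
  set B := ball c (10 * r) with hB
  set S := {y | 4 ^ finrank ℝ E * (16 * l) < maximalFunction μ (‖G ·‖ₑ ^ 2) y ∧ h y ≤ γ * l}
  rcases (ball c (5 * r) ∩ S).eq_empty_or_nonempty with hempty | ⟨y₀, hy₀, -, hhy₀⟩
  · simp [hempty]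
  obtain ⟨v, hv⟩ := hosc c (10 * r) (by linarith)
  have hBv : ∫⁻ z in B, ‖G z - v‖ₑ ^ 2 ∂μ ≤ γ * l * μ B :=
    (hv y₀ (ball_subset_ball (by linarith) hy₀)).trans (by rw [mul_comm]; gcongr)
  have hvl : ‖v‖ₑ ^ 2 ≤ 4 * l := by
    refine enorm_sq_le_of_setLIntegral_le (measure_ball_pos μ c (by linarith)).ne'
      measure_ball_lt_top.ne hG (hmax _ _ (by linarith) (ball_subset_ball (by linarith) hx))
      (hBv.trans ?_)
    gcongr
    exact mul_le_of_le_one_left' hγ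
  set W : E → ℝ≥0∞ := B.indicator fun z ↦ 2 * ‖G z - v‖ₑ ^ 2
  refine (ENNReal.mul_le_mul_iff_right (a := 8 * l) (by simpa) (by finiteness)).1 ?_
  calc 8 * l * μ (ball c (5 * r) ∩ S) ≤ 8 * l * μ {y | 8 * l < maximalFunction μ W y} := by
        gcongr 8 * l * μ ?_
        exact fun y hy ↦ lt_maximalFunction_indicator_sub hx hmax hvl hy.1 hy.2.1
    _ ≤ 5 ^ finrank ℝ E * ∫⁻ z, W z ∂μ := mul_meas_lt_maximalFunction_le W _
    _ ≤ 5 ^ finrank ℝ E * (2 * (γ * l * μ B)) := by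
        rw [lintegral_indicator measurableSet_ball, lintegral_const_mul' _ _ (by simp)]
        gcongr
    _ = 2 * l * (50 ^ finrank ℝ E * γ * μ (ball c r)) := by
        rw [hB, measure_ball_mul_radius μ (by norm_num), ENNReal.ofReal_ofNat,
          show (50 : ℝ≥0∞) = 5 * 10 by norm_num, mul_pow]
        ring
    _ ≤ 8 * l * (50 ^ finrank ℝ E * γ * μ (ball c r)) := by
        gcongr
        norm_num

theorem good_lambda_of_meanSqOscillationLE [Nontrivial E] {G : E → F} {h : E → ℝ≥0∞}
    (hG : StronglyMeasurable G) (hosc : MeanSqOscillationLE μ G h)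
    (hGint : ∫⁻ x, ‖G x‖ₑ ^ 2 ∂μ ≠ ∞) (hl₀ : l ≠ 0) (hl : l ≠ ∞) {γ : ℝ≥0∞} (hγ : γ ≤ 1) :
    μ {x | 4 ^ finrank ℝ E * 16 * l < maximalFunction μ (‖G ·‖ₑ ^ 2) x} ≤
      50 ^ finrank ℝ E * γ * μ {x | l < maximalFunction μ (‖G ·‖ₑ ^ 2) x} +
        μ {x | γ * l < h x} := by
  set U : E → ℝ≥0∞ := (‖G ·‖ₑ ^ 2)
  set S := {x | 4 ^ finrank ℝ E * (16 * l) < maximalFunction μ U x ∧ h x ≤ γ * l}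
  have hScov : {x | 4 ^ finrank ℝ E * 16 * l < maximalFunction μ U x} ⊆
      S ∩ {x | l < maximalFunction μ U x} ∪ {x | γ * l < h x} := fun x hx ↦ by
    rw [mem_ofPred_eq, mul_assoc] at hx
    rcases le_or_gt (h x) (γ * l) with hle | hlt
    · refine .inl ⟨⟨hx, hle⟩, lt_of_le_of_lt ?_ hx⟩
      rw [← mul_assoc]
      exact le_mul_of_one_le_left' (one_le_mul (one_le_pow₀ (by norm_num)) (by norm_num))
    · exact .inr hlt
  obtain ⟨R, hR⟩ := exists_radius_le_of_mul_measure_ball_le (μ := μ) hl₀ hGint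
  refine (measure_mono hScov).trans ((measure_union_le _ _).trans ?_)
  gcongr
  rw [inter_comm, ← Measure.restrict_apply (isOpen_lt_maximalFunction U l).measurableSet]
  refine measure_le_mul_of_forall_exists_ball (R := R) fun x hx ↦ ?_
  obtain ⟨c, r, hxc, hlt, hmax⟩ := exists_ball_of_lt_maximalFunction hGint hl₀ hx
  refine ⟨c, r, hxc, hR c r (hlt.le.trans (setLIntegral_le_lintegral _ _)),
    fun y hy ↦ lt_maximalFunction_iff.2 ⟨c, r, hy, hlt⟩, ?_⟩
  rw [Measure.restrict_apply measurableSet_ball]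
  exact measure_inter_ball_le_of_meanSqOscillationLE hG hosc hl₀ hl hγ hxc hmax

theorem lintegral_maximalFunction_rpow_le_of_meanSqOscillationLE [Nontrivial E] {G : E → F}
    {h : E → ℝ≥0∞} (hG : StronglyMeasurable G) (hh : AEMeasurable h μ)
    (hosc : MeanSqOscillationLE μ G h) (hGint : ∫⁻ x, ‖G x‖ₑ ^ 2 ∂μ ≠ ∞) {q : ℝ} (hq : 1 < q)
    (hGq : ∫⁻ x, (‖G x‖ₑ ^ 2) ^ q ∂μ ≠ ∞) :
    ∫⁻ x, maximalFunction μ (‖G ·‖ₑ ^ 2) x ^ q ∂μ ≤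
      2 * ((4 ^ finrank ℝ E * 16 * (2 * 50 ^ finrank ℝ E * (4 ^ finrank ℝ E * 16) ^ q)) ^ q *
        ∫⁻ x, h x ^ q ∂μ) := by
  have : 0 ≤ q := by linarith
  set L : ℝ≥0∞ := 4 ^ finrank ℝ E * 16
  set K : ℝ≥0∞ := 2 * 50 ^ finrank ℝ E * L ^ q with hKdef
  have hL : L ≠ ∞ := by finiteness
  have hL₁ : 1 ≤ L := one_le_mul (one_le_pow₀ (by norm_num)) (by norm_num)
  have hLq : 1 ≤ L ^ q := ENNReal.one_le_rpow hL₁ (by linarith)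
  have hK : K ≠ ∞ := by finiteness
  have hK₁ : 1 ≤ K := one_le_mul (one_le_mul (by norm_num) (one_le_pow₀ (by norm_num))) hLq
  have hfin : ∫⁻ x, maximalFunction μ (‖G ·‖ₑ ^ 2) x ^ q ∂μ ≠ ∞ :=
    ne_top_of_le_ne_top (by finiteness)
      (lintegral_maximalFunction_rpow_le hq (hG.enorm.pow_const 2))
  have hLK : L * K = L / K⁻¹ := by rw [div_eq_mul_inv, inv_inv]
  rw [hLK]
  refine lintegral_rpow_le_of_good_lambda (ε := 50 ^ finrank ℝ E * K⁻¹)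
    (measurable_maximalFunction _).aemeasurable hh (by linarith) hfin (by positivity) hL
    (by simpa) (ENNReal.inv_ne_top.2 (by positivity)) ?_ fun t ht ↦ ?_
  · have hA : 50 ^ finrank ℝ E * L ^ q ≠ 0 := by positivity
    have hA' : 50 ^ finrank ℝ E * L ^ q ≠ ∞ := by finiteness
    calc L ^ q * (50 ^ finrank ℝ E * K⁻¹)
        = 2⁻¹ * ((50 ^ finrank ℝ E * L ^ q) * (50 ^ finrank ℝ E * L ^ q)⁻¹) := by
          rw [hKdef, mul_assoc 2, ENNReal.mul_inv (by simp) (by simp)]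
          ring
      _ ≤ 2⁻¹ := by rw [ENNReal.mul_inv_cancel hA hA', mul_one]
  · exact good_lambda_of_meanSqOscillationLE hG hosc hGint (by simpa) (by simp) (by simpa)

end FeffermanStein

section Sobolev

lemma sq_lintegral_le {α : Type*} [MeasurableSpace α] {μ : Measure α} {f : α → ℝ≥0∞}
    (hf : AEMeasurable f μ) : (∫⁻ x, f x ∂μ) ^ 2 ≤ μ univ * ∫⁻ x, f x ^ 2 ∂μ := by
  have holder := ENNReal.lintegral_mul_le_Lp_mul_Lq μ (p := 2) (q := 2) ⟨by norm_num, by norm_num,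
    by norm_num⟩ (aemeasurable_const (b := 1)) hf
  have hsqrt (A : ℝ≥0∞) : (A ^ (1 / 2 : ℝ)) ^ 2 = A := by
    rw [← ENNReal.rpow_natCast, ← ENNReal.rpow_mul]
    norm_num
  have hsq := pow_le_pow_left' holder 2
  simpa only [Pi.mul_apply, one_mul, ENNReal.one_rpow, lintegral_const, mul_pow, hsqrt,
    one_pow, ENNReal.rpow_ofNat] using hsq

lemma sum_lintegral_le_lintegral_sum {α ι : Type*} [MeasurableSpace α] (s : Finset ι)
    (μ : Measure α) (f : ι → α → ℝ≥0∞) :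
    ∑ i ∈ s, ∫⁻ x, f i x ∂μ ≤ ∫⁻ x, ∑ i ∈ s, f i x ∂μ := by
  classical
  induction s using Finset.induction_on with
  | empty => simp
  | insert i s hi ih =>
    simp only [Finset.sum_insert hi]
    exact (add_le_add_right ih _).trans (le_lintegral_add _ _)

variable {F : Type*} [NormedAddCommGroup F] [NormedSpace ℝ F] {g : ℝ → F}
  {a L : ℝ}

lemma enorm_le_enorm_add_lintegral_deriv {b t : ℝ} (hg : ContDiffOn ℝ 1 g (Icc a b))
    (ht : t ∈ Icc a b) : ‖g a‖ₑ ≤ ‖g t‖ₑ + ∫⁻ s in Ioo a b, ‖deriv g s‖ₑ := by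
  have hdiff : ‖g t - g a‖ₑ ≤ ∫⁻ s in Ioo a b, ‖deriv g s‖ₑ := by
    rw [setLIntegral_congr Ioo_ae_eq_Icc]
    exact (enorm_sub_le_lintegral_deriv_of_contDiffOn_Icc
      (hg.mono (Icc_subset_Icc_right ht.2)) ht.1).trans
      (lintegral_mono_set (Icc_subset_Icc_right ht.2))
  calc ‖g a‖ₑ = ‖g t - (g t - g a)‖ₑ := by rw [sub_sub_cancel]
    _ ≤ ‖g t‖ₑ + ‖g t - g a‖ₑ := enorm_sub_le
    _ ≤ ‖g t‖ₑ + ∫⁻ s in Ioo a b, ‖deriv g s‖ₑ := by gcongr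

variable [CompleteSpace F]

lemma enorm_sq_le_setLIntegral_Ioo (hL : 0 < L) (hg : ContDiffOn ℝ 1 g (Icc a (a + L))) :
    ‖g a‖ₑ ^ 2 ≤ ∫⁻ t in Ioo a (a + L),
      (ENNReal.ofReal (2 / L) * ‖g t‖ₑ ^ 2 + ENNReal.ofReal (2 * L) * ‖deriv g t‖ₑ ^ 2) := by
  set I := Ioo a (a + L)
  set D := ∫⁻ s in I, ‖deriv g s‖ₑ ^ 2
  have hgmeas : AEMeasurable (fun t ↦ ‖g t‖ₑ ^ 2) (volume.restrict I) :=
    (((hg.continuousOn.mono Ioo_subset_Icc_self).aestronglyMeasurable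
      measurableSet_Ioo).enorm).pow_const 2
  have hgmeas' : Measurable fun t ↦ ‖deriv g t‖ₑ := (stronglyMeasurable_deriv g).enorm
  have hI : volume I = ENNReal.ofReal L := by rw [Real.volume_Ioo, add_sub_cancel_left]
  have hpointwise : ∀ t ∈ I, ‖g a‖ₑ ^ 2 ≤ 2 * ‖g t‖ₑ ^ 2 + 2 * (ENNReal.ofReal L * D) := by
    intro t ht
    have hle := enorm_le_enorm_add_lintegral_deriv hg (Ioo_subset_Icc_self ht)
    refine (pow_le_pow_left' hle 2).trans ((add_sq_le_two_mul_add _ _).trans ?_)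
    gcongr
    rw [← hI, ← Measure.restrict_apply_univ I]
    exact sq_lintegral_le hgmeas'.aemeasurable
  have haverage : ENNReal.ofReal L * ‖g a‖ₑ ^ 2 ≤
      ∫⁻ t in I, (2 * ‖g t‖ₑ ^ 2 + 2 * (ENNReal.ofReal L * D)) := by
    rw [mul_comm, ← hI, ← setLIntegral_const]
    rw [← hI] at hpointwise
    exact setLIntegral_mono' measurableSet_Ioo hpointwise
  rw [lintegral_add_right _ measurable_const, lintegral_const_mul'' _ hgmeas, setLIntegral_const,
    hI] at haverage
  have hinv : ENNReal.ofReal L⁻¹ * ENNReal.ofReal L = 1 := by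
    rw [← ENNReal.ofReal_mul (by positivity), inv_mul_cancel₀ hL.ne', ENNReal.ofReal_one]
  rw [lintegral_add_right _ ((hgmeas'.pow_const 2).const_mul _), lintegral_const_mul'' _ hgmeas,
    lintegral_const_mul _ (hgmeas'.pow_const 2), div_eq_mul_inv, ENNReal.ofReal_mul zero_le_two,
    ENNReal.ofReal_mul zero_le_two, ENNReal.ofReal_ofNat]
  calc ‖g a‖ₑ ^ 2 = ENNReal.ofReal L⁻¹ * (ENNReal.ofReal L * ‖g a‖ₑ ^ 2) := by
        rw [← mul_assoc, hinv, one_mul]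
    _ ≤ ENNReal.ofReal L⁻¹ * (2 * (∫⁻ t in I, ‖g t‖ₑ ^ 2) +
        2 * (ENNReal.ofReal L * D) * ENNReal.ofReal L) := by gcongr
    _ = 2 * ENNReal.ofReal L⁻¹ * (∫⁻ t in I, ‖g t‖ₑ ^ 2) +
        ENNReal.ofReal L⁻¹ * ENNReal.ofReal L * (2 * ENNReal.ofReal L * D) := by ring
    _ = _ := by rw [hinv, one_mul]

/-- The integrand of the one-dimensional Sobolev inequality at length scale `l`: its integral over
an interval of length between `l / 2` and `l` controls `‖g‖ₑ ^ 2` at the left endpoint. -/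
noncomputable def sobolevDensity (l : ℝ) (g : ℝ → F) (t : ℝ) : ℝ≥0∞ :=
  ENNReal.ofReal (4 / l) * ‖g t‖ₑ ^ 2 + ENNReal.ofReal (2 * l) * ‖deriv g t‖ₑ ^ 2

theorem enorm_sq_le_setLIntegral_sobolevDensity (hL : 0 < L)
    (hg : ContDiffOn ℝ 1 g (Icc a (a + L))) {l : ℝ → ℝ}
    (hl : ∀ t ∈ Ioo a (a + L), l t ∈ Icc L (2 * L)) :
    ‖g a‖ₑ ^ 2 ≤ ∫⁻ t in Ioo a (a + L), sobolevDensity (l t) g t := by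
  refine (enorm_sq_le_setLIntegral_Ioo hL hg).trans
    (setLIntegral_mono' measurableSet_Ioo fun t ht ↦ ?_)
  obtain ⟨hLl, hl2⟩ := hl t ht
  unfold sobolevDensity
  gcongr ENNReal.ofReal ?_ * _ + ENNReal.ofReal ?_ * _
  · rw [div_le_div_iff₀ hL (hL.trans_le hLl)]
    linarith
  · linarith

lemma measurable_sobolevDensity (hg : Continuous g) (l : ℝ) :
    Measurable (sobolevDensity l g) := by
  have hderiv : Measurable fun t ↦ ‖deriv g t‖ₑ := (stronglyMeasurable_deriv g).enorm
  exact ((hg.enorm.measurable.pow_const 2).const_mul _).add ((hderiv.pow_const 2).const_mul _)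

end Sobolev

section Pieces

open scoped SchwartzMap

lemma exists_schwartzMap_comp_affine {F : Type*} [NormedAddCommGroup F] [NormedSpace ℝ F]
    (f : 𝓢(ℝ, F)) {L : ℝ} (hL : L ≠ 0) (d : ℝ) : ∃ g : 𝓢(ℝ, F), ∀ x, g x = f (L * x + d) := by
  have hgrowth : (fun x : ℝ ↦ L * x + d).HasTemperateGrowth := by fun_prop
  have hanti : AntilipschitzWith ‖L‖₊⁻¹ fun x : ℝ ↦ L * x + d :=
    AntilipschitzWith.of_le_mul_dist fun x y ↦ by
      have hmul : L * x + d - (L * y + d) = L * (x - y) := by ring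
      rw [dist_eq_norm, dist_eq_norm, hmul, norm_mul, NNReal.coe_inv, coe_nnnorm,
        inv_mul_cancel_left₀ (norm_ne_zero_iff.2 hL)]
  exact ⟨SchwartzMap.compCLMOfAntilipschitz ℝ hgrowth hanti f, fun x ↦ rfl⟩

lemma norm_e2pi (t : ℝ) : ‖e2pi t‖ = 1 := by
  rw [e2pi, show 2 * (π : ℂ) * Complex.I * t = ((2 * π * t : ℝ) : ℂ) * Complex.I by push_cast; ring,
    Complex.norm_exp_ofReal_mul_I]

lemma e2pi_add (s t : ℝ) : e2pi (s + t) = e2pi s * e2pi t := by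
  rw [e2pi, e2pi, e2pi, ← Complex.exp_add]
  push_cast
  ring_nf

lemma continuous_e2pi : Continuous e2pi := by
  unfold e2pi
  fun_prop

lemma fourier_eq_integral_e2pi_mul (f : ℝ → ℂ) (ξ : ℝ) :
    𝓕 f ξ = ∫ t, e2pi (-(ξ * t)) * f t := by
  rw [Real.fourier_real_eq_integral_exp_smul]
  refine integral_congr_ae (.of_forall fun t ↦ ?_)
  simp only [smul_eq_mul, e2pi]
  push_cast
  ring_nf

lemma fourier_phim (φ : ℝ → ℂ) {a b : ℝ} (hab : a < b) (ξ : ℝ) :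
    𝓕 (phim φ a b) ξ = 𝓕 φ ((ξ - a) / (b - a)) := by
  have hL : 0 < b - a := sub_pos.2 hab
  set h : ℝ → ℂ := fun y ↦ e2pi (-((ξ - a) / (b - a) * y)) * φ y
  have hphase (x : ℝ) : e2pi (-(ξ * x)) * phim φ a b x = ((b - a : ℝ) : ℂ) * h ((b - a) * x) := by
    have hdiv : -((ξ - a) / (b - a) * ((b - a) * x)) = -(ξ * x) + a * x := by
      rw [← mul_assoc, div_mul_cancel₀ _ hL.ne']
      ring
    simp only [phim, h, hdiv, e2pi_add]
    ring
  rw [fourier_eq_integral_e2pi_mul, fourier_eq_integral_e2pi_mul]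
  simp_rw [hphase]
  rw [integral_const_mul, Measure.integral_comp_mul_left h (b - a), abs_of_pos (inv_pos.2 hL),
    Complex.real_smul, ← mul_assoc, ← Complex.ofReal_mul, mul_inv_cancel₀ hL.ne',
    Complex.ofReal_one, one_mul]

lemma exists_schwartzMap_eq_phim (φ : 𝓢(ℝ, ℂ)) {a b : ℝ} (hab : a < b) :
    ∃ Φ : 𝓢(ℝ, ℂ), ⇑Φ = phim φ a b := by
  have hL : b - a ≠ 0 := (sub_pos.2 hab).ne'
  obtain ⟨ψ, hψ⟩ := exists_schwartzMap_comp_affine (𝓕 φ) (inv_ne_zero hL) (-(a / (b - a)))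
  obtain ⟨φL, hφL⟩ := exists_schwartzMap_comp_affine φ hL 0
  have hfourier : 𝓕 (phim φ a b) = ψ := by
    ext ξ
    rw [fourier_phim _ hab, hψ, SchwartzMap.fourier_coe]
    have harg : (b - a)⁻¹ * ξ + -(a / (b - a)) = (ξ - a) / (b - a) := by
      field_simp
      ring
    rw [harg]
  have hcont : Continuous (phim φ a b) := by
    have := φ.continuous
    have := continuous_e2pi
    unfold phim
    fun_prop
  have hint : Integrable (phim φ a b) := by
    refine (φL.integrable.norm.const_mul (b - a)).mono' hcont.aestronglyMeasurable
      (.of_forall fun x ↦ ?_)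
    rw [phim, norm_mul, norm_mul, norm_e2pi, mul_one, Complex.norm_real, Real.norm_eq_abs,
      abs_of_pos (sub_pos.2 hab), hφL, add_zero]
  refine ⟨𝓕⁻ ψ, ?_⟩
  rw [SchwartzMap.fourierInv_coe, ← hfourier,
    hcont.fourierInv_fourier_eq hint (hfourier ▸ ψ.integrable)]

lemma exists_schwartzMap_eq_conv (f Φ : 𝓢(ℝ, ℂ)) :
    ∃ g : 𝓢(ℝ, ℂ), ⇑g = conv f Φ ∧ ∀ ξ, 𝓕 (⇑g) ξ = 𝓕 (⇑f) ξ * 𝓕 (⇑Φ) ξ := by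
  refine ⟨SchwartzMap.convolution (ContinuousLinearMap.mul ℂ ℂ) f Φ, ?_, fun ξ ↦ ?_⟩
  · ext x
    rw [SchwartzMap.convolution_apply]
    rfl
  · rw [← SchwartzMap.fourier_coe, SchwartzMap.fourier_convolution,
      SchwartzMap.pairing_apply_apply]
    rfl

lemma exists_schwartzMap_eq_conv_phim (φ f : 𝓢(ℝ, ℂ)) {a b : ℝ} (hab : a < b) :
    ∃ g : 𝓢(ℝ, ℂ), ⇑g = conv f (phim φ a b) ∧
      ∀ ξ, 𝓕 (⇑g) ξ = 𝓕 (⇑f) ξ * 𝓕 (⇑φ) ((ξ - a) / (b - a)) := by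
  obtain ⟨Φ, hΦ⟩ := exists_schwartzMap_eq_phim φ hab
  simp_rw [← fourier_phim φ hab, ← hΦ]
  exact exists_schwartzMap_eq_conv f Φ

lemma fourier_deriv_schwartzMap (f : 𝓢(ℝ, ℂ)) (ξ : ℝ) :
    𝓕 (deriv f) ξ = 2 * π * Complex.I * ξ * 𝓕 (⇑f) ξ := by
  have hint : Integrable (deriv f) := (SchwartzMap.derivCLM ℂ ℂ f).integrable
  rw [Real.fourier_deriv f.integrable f.differentiable hint]
  rfl

lemma deriv_conv (f Φ : 𝓢(ℝ, ℂ)) : deriv (conv f Φ) = conv (deriv f) Φ := by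
  obtain ⟨g, hg, hg'⟩ := exists_schwartzMap_eq_conv f Φ
  obtain ⟨h, hh, hh'⟩ := exists_schwartzMap_eq_conv (SchwartzMap.derivCLM ℂ ℂ f) Φ
  have hcoe (u : 𝓢(ℝ, ℂ)) : ⇑(SchwartzMap.derivCLM ℂ ℂ u) = deriv u := rfl
  have hfourier : 𝓕 (SchwartzMap.derivCLM ℂ ℂ g) = 𝓕 h := by
    ext ξ
    rw [SchwartzMap.fourier_coe, SchwartzMap.fourier_coe, hh', hcoe, hcoe,
      fourier_deriv_schwartzMap, fourier_deriv_schwartzMap, hg']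
    ring
  have hderiv : SchwartzMap.derivCLM ℂ ℂ g = h := by
    simpa only [FourierTransform.fourierInv_fourier_eq] using congrArg (𝓕⁻ ·) hfourier
  rw [← hcoe f, ← hh, ← hg, ← hcoe g, hderiv]

lemma iteratedDeriv_conv (k : ℕ) (f Φ : 𝓢(ℝ, ℂ)) :
    iteratedDeriv k (conv f Φ) = conv (iteratedDeriv k f) Φ := by
  induction k generalizing f with
  | zero => simp only [iteratedDeriv_zero]
  | succ k ih =>
    rw [iteratedDeriv_succ', iteratedDeriv_succ', deriv_conv]
    exact ih (SchwartzMap.derivCLM ℂ ℂ f)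

lemma exists_schwartzMap_eq_iteratedDeriv (k : ℕ) (f : 𝓢(ℝ, ℂ)) :
    ∃ g : 𝓢(ℝ, ℂ), ⇑g = iteratedDeriv k f := by
  induction k generalizing f with
  | zero => exact ⟨f, iteratedDeriv_zero.symm⟩
  | succ k ih =>
    rw [iteratedDeriv_succ']
    exact ih (SchwartzMap.derivCLM ℂ ℂ f)

lemma lintegral_enorm_sq_fourier {V H : Type*} [NormedAddCommGroup V] [InnerProductSpace ℝ V]
    [FiniteDimensional ℝ V] [MeasurableSpace V] [BorelSpace V] [NormedAddCommGroup H]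
    [InnerProductSpace ℂ H] [CompleteSpace H] (f : 𝓢(V, H)) :
    ∫⁻ ξ, ‖𝓕 (⇑f) ξ‖ₑ ^ 2 = ∫⁻ x, ‖f x‖ₑ ^ 2 := by
  have hofReal (g : 𝓢(V, H)) : ∫⁻ x, ‖g x‖ₑ ^ 2 = ENNReal.ofReal (∫ x, ‖g x‖ ^ 2) := by
    rw [ofReal_integral_eq_lintegral_ofReal ((g.memLp 2 volume).integrable_norm_pow (by norm_num))
      (.of_forall fun x ↦ by positivity)]
    simp_rw [ENNReal.ofReal_pow (norm_nonneg _), ofReal_norm]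
  rw [← SchwartzMap.fourier_coe, hofReal, hofReal, SchwartzMap.integral_norm_sq_fourier]

variable {ι : Type*} [Fintype ι] {a b : ι → ℝ}

lemma sum_setLIntegral_Ioo_le (hdisj : Pairwise (Disjoint on fun m ↦ Ioo (a m) (b m)))
    (μ : Measure ℝ) (g : ℝ → ℝ≥0∞) : ∑ m, ∫⁻ ξ in Ioo (a m) (b m), g ξ ∂μ ≤ ∫⁻ ξ, g ξ ∂μ := by
  rw [← tsum_fintype (L := .unconditional _), ← lintegral_iUnion (fun _ ↦ measurableSet_Ioo) hdisj]
  exact setLIntegral_le_lintegral _ _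

lemma sum_enorm_sq_comp_affine_le (hab : ∀ m, a m < b m)
    (hdisj : Pairwise (Disjoint on fun m ↦ Ioo (a m) (b m))) {ψ : ℝ → ℂ}
    (hψ : support ψ ⊆ Ioo 0 1) {M : ℝ≥0∞} (hM : ∀ η, ‖ψ η‖ₑ ≤ M) (ξ : ℝ) :
    ∑ m, ‖ψ ((ξ - a m) / (b m - a m))‖ₑ ^ 2 ≤ M ^ 2 := by
  have hmem {m : ι} (hm : ψ ((ξ - a m) / (b m - a m)) ≠ 0) : ξ ∈ Ioo (a m) (b m) := by
    have hL : 0 < b m - a m := sub_pos.2 (hab m)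
    obtain ⟨h₀, h₁⟩ := hψ hm
    rw [div_pos_iff_of_pos_right hL] at h₀
    rw [div_lt_one hL] at h₁
    exact ⟨by linarith, by linarith⟩
  by_cases! h : ∃ m, ψ ((ξ - a m) / (b m - a m)) ≠ 0
  · obtain ⟨m, hm⟩ := h
    rw [Finset.sum_eq_single m (fun m' _ hne ↦ ?_) (by simp)]
    · gcongr
      exact hM _
    · by_contra hm'
      exact disjoint_left.1 (hdisj hne) (hmem (m := m') fun h₀ ↦ hm' (by simp [h₀])) (hmem hm)
  · simp [h]

theorem lintegral_sum_enorm_sq_conv_phim_le (hab : ∀ m, a m < b m)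
    (hdisj : Pairwise (Disjoint on fun m ↦ Ioo (a m) (b m))) {φ : 𝓢(ℝ, ℂ)}
    (hφ : support (𝓕 ⇑φ) ⊆ Ioo 0 1) {M : ℝ≥0∞} (hM : ∀ η, ‖𝓕 (⇑φ) η‖ₑ ≤ M) (f : 𝓢(ℝ, ℂ)) :
    ∫⁻ x, ∑ m, ‖conv f (phim φ (a m) (b m)) x‖ₑ ^ 2 ≤ M ^ 2 * ∫⁻ x, ‖f x‖ₑ ^ 2 := by
  choose g hg hgξ using fun m ↦ exists_schwartzMap_eq_conv_phim φ f (hab m)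
  have hmeas (u : 𝓢(ℝ, ℂ)) : Measurable fun x ↦ ‖u x‖ₑ ^ 2 := by
    have := u.continuous
    fun_prop
  calc ∫⁻ x, ∑ m, ‖conv f (phim φ (a m) (b m)) x‖ₑ ^ 2
      = ∑ m, ∫⁻ ξ, ‖𝓕 (⇑(g m)) ξ‖ₑ ^ 2 := by
        simp_rw [← hg, lintegral_finsetSum _ fun m _ ↦ hmeas (g m), lintegral_enorm_sq_fourier]
    _ = ∫⁻ ξ, ∑ m, ‖𝓕 (⇑(g m)) ξ‖ₑ ^ 2 := (lintegral_finsetSum _ fun m _ ↦ hmeas (𝓕 (g m))).symm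
    _ ≤ ∫⁻ ξ, M ^ 2 * ‖𝓕 (⇑f) ξ‖ₑ ^ 2 := lintegral_mono fun ξ ↦ by
        simp_rw [hgξ, enorm_mul, mul_pow]
        rw [← Finset.mul_sum, mul_comm]
        gcongr
        exact sum_enorm_sq_comp_affine_le hab hdisj hφ hM ξ
    _ = M ^ 2 * ∫⁻ x, ‖f x‖ₑ ^ 2 := by
        have hfmeas : Measurable fun ξ ↦ ‖𝓕 (⇑f) ξ‖ₑ ^ 2 := hmeas (𝓕 f)
        rw [lintegral_const_mul _ hfmeas, lintegral_enorm_sq_fourier]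

end Pieces

section DifferenceKernel

open scoped SchwartzMap

lemma lintegral_sobolevDensity_fourier (S : 𝓢(ℝ, ℂ)) {l : ℝ} (hl : 0 ≤ l) :
    ∫⁻ ξ, sobolevDensity l (𝓕 ⇑S) ξ =
      ∫⁻ t, ENNReal.ofReal (4 / l + 8 * π ^ 2 * l * t ^ 2) * ‖S t‖ₑ ^ 2 := by
  have hgrowth : (fun t : ℝ ↦ -2 * (π : ℂ) * Complex.I * t).HasTemperateGrowth := by fun_prop
  set D := SchwartzMap.smulLeftCLM ℂ (fun t : ℝ ↦ -2 * (π : ℂ) * Complex.I * t) S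
  have hD (t : ℝ) : D t = (-2 * (π : ℂ) * Complex.I * t) • S t :=
    SchwartzMap.smulLeftCLM_apply_apply hgrowth S t
  have hid : (fun t : ℝ ↦ t).HasTemperateGrowth := by fun_prop
  have hint : Integrable fun t : ℝ ↦ t • S t :=
    (SchwartzMap.smulLeftCLM ℂ (fun t : ℝ ↦ t) S).integrable.congr
      (.of_forall fun t ↦ SchwartzMap.smulLeftCLM_apply_apply hid S t)
  have hderiv : deriv (𝓕 ⇑S) = 𝓕 ⇑D := by
    rw [Real.deriv_fourier S.integrable hint]
    simp_rw [← hD]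
  have hnorm (t : ℝ) : ‖D t‖ₑ ^ 2 = ENNReal.ofReal (4 * π ^ 2 * t ^ 2) * ‖S t‖ₑ ^ 2 := by
    rw [hD, smul_eq_mul, enorm_mul, mul_pow, ← ofReal_norm (_ * _),
      ← ENNReal.ofReal_pow (norm_nonneg _)]
    congr 2
    simp only [norm_mul, norm_neg, Complex.norm_ofNat, Complex.norm_real, Real.norm_eq_abs,
      Complex.norm_I, mul_pow, sq_abs]
    norm_num
  have hmeas (u : 𝓢(ℝ, ℂ)) : Measurable fun x ↦ ‖u x‖ₑ ^ 2 :=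
    u.continuous.enorm.measurable.pow_const 2
  have hmeasS : Measurable fun ξ ↦ ‖𝓕 (⇑S) ξ‖ₑ ^ 2 := hmeas (𝓕 S)
  have hmeasD : Measurable fun ξ ↦ ‖𝓕 (⇑D) ξ‖ₑ ^ 2 := hmeas (𝓕 D)
  simp only [sobolevDensity, hderiv]
  rw [lintegral_add_left (hmeasS.const_mul _), lintegral_const_mul _ hmeasS,
    lintegral_const_mul _ hmeasD, lintegral_enorm_sq_fourier, lintegral_enorm_sq_fourier,
    ← lintegral_const_mul _ (hmeas S), ← lintegral_const_mul _ (hmeas D),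
    ← lintegral_add_left ((hmeas S).const_mul _)]
  refine lintegral_congr fun t ↦ ?_
  rw [hnorm, ← mul_assoc, ← ENNReal.ofReal_mul (by positivity), ← add_mul,
    ← ENNReal.ofReal_add (by positivity) (by positivity)]
  ring_nf

/-- The kernel whose Fourier transform at `a` is, up to a unimodular factor, the increment from
`0` to `z` of the piece of `F` on the frequency interval `[a, a + l]`, moved to the origin in
frequency. -/
noncomputable def diffKernel (ψ F : ℝ → ℂ) (z l t : ℝ) : ℂ :=
  F t * (l * (ψ (l * (z - t)) - ψ (-(l * t))))

/-- The derivative of the dilates of `ψ` in the dilation parameter: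
`d/dl (l ψ(l x)) = (dilationDeriv ψ)(l x)`. -/
noncomputable def dilationDeriv (ψ : 𝓢(ℝ, ℂ)) : 𝓢(ℝ, ℂ) :=
  ψ + SchwartzMap.smulLeftCLM ℂ (fun x : ℝ ↦ (x : ℂ)) (SchwartzMap.derivCLM ℂ ℂ ψ)

lemma dilationDeriv_apply (ψ : 𝓢(ℝ, ℂ)) (x : ℝ) : dilationDeriv ψ x = ψ x + x * deriv ψ x := by
  have hgrowth : (fun x : ℝ ↦ (x : ℂ)).HasTemperateGrowth := by fun_prop
  rw [dilationDeriv, add_apply, SchwartzMap.smulLeftCLM_apply_apply hgrowth]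
  rfl

lemma hasDerivAt_mul_comp_mul (ψ : 𝓢(ℝ, ℂ)) (x l : ℝ) :
    HasDerivAt (fun l : ℝ ↦ (l : ℂ) * ψ (l * x)) (dilationDeriv ψ (l * x)) l := by
  have hid : HasDerivAt (fun l : ℝ ↦ (l : ℂ)) 1 l := Complex.ofRealCLM.hasDerivAt
  have hcomp : HasDerivAt (fun l : ℝ ↦ ψ (l * x)) (x • deriv ψ (l * x)) l :=
    (ψ.hasDerivAt (l * x)).scomp l (by simpa using (hasDerivAt_id l).mul_const x)
  refine (hid.mul hcomp).congr_deriv ?_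
  rw [dilationDeriv_apply, Complex.real_smul]
  push_cast
  ring

variable (ψ F : 𝓢(ℝ, ℂ)) (z : ℝ) {l : ℝ}

lemma exists_schwartzMap_eq_diffKernel (hl : l ≠ 0) : ∃ S : 𝓢(ℝ, ℂ), ⇑S = diffKernel ψ F z l := by
  obtain ⟨g₁, hg₁⟩ := exists_schwartzMap_comp_affine ψ (neg_ne_zero.2 hl) (l * z)
  obtain ⟨g₂, hg₂⟩ := exists_schwartzMap_comp_affine ψ (neg_ne_zero.2 hl) 0
  refine ⟨SchwartzMap.pairing (ContinuousLinearMap.mul ℂ ℂ) F ((l : ℂ) • (g₁ - g₂)), ?_⟩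
  ext t
  rw [SchwartzMap.pairing_apply_apply, ContinuousLinearMap.mul_apply', smul_apply, sub_apply, hg₁,
    hg₂, diffKernel, smul_eq_mul]
  ring_nf

lemma hasDerivAt_diffKernel (hl : l ≠ 0) (t : ℝ) :
    HasDerivAt (fun l ↦ diffKernel ψ F z l t) ((l : ℂ)⁻¹ * diffKernel (dilationDeriv ψ) F z l t)
      l := by
  have hl' : (l : ℂ) ≠ 0 := mod_cast hl
  have h := ((hasDerivAt_mul_comp_mul ψ (z - t) l).sub
    (hasDerivAt_mul_comp_mul ψ (-t) l)).const_mul (F t)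
  simp only [Pi.sub_def, ← mul_sub, mul_neg] at h
  refine h.congr_deriv ?_
  rw [diffKernel]
  field_simp

lemma norm_inv_mul_diffKernel_le (hl : l ≠ 0) {M : ℝ} (hM : ∀ x, ‖ψ x‖ ≤ M) (t : ℝ) :
    ‖(l : ℂ)⁻¹ * diffKernel ψ F z l t‖ ≤ ‖F t‖ * (2 * M) := by
  have hl' : (l : ℂ) ≠ 0 := mod_cast hl
  rw [diffKernel, mul_left_comm (F t), inv_mul_cancel_left₀ hl', norm_mul]
  gcongr
  refine (norm_sub_le _ _).trans ?_
  linarith [hM (l * (z - t)), hM (-(l * t))]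

lemma hasDerivAt_fourier_diffKernel (ξ : ℝ) (hl : 0 < l) :
    HasDerivAt (fun l ↦ 𝓕 (diffKernel ψ F z l) ξ)
      ((l : ℂ)⁻¹ * 𝓕 (diffKernel (dilationDeriv ψ) F z l) ξ) l := by
  have hcont (u : 𝓢(ℝ, ℂ)) (s : ℝ) :
      Continuous fun t ↦ e2pi (-(ξ * t)) * diffKernel u F z s t := by
    have := continuous_e2pi
    have := u.continuous
    have := F.continuous
    unfold diffKernel
    fun_prop
  obtain ⟨S, hS⟩ := exists_schwartzMap_eq_diffKernel ψ F z hl.ne'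
  have hint : Integrable fun t ↦ e2pi (-(ξ * t)) * diffKernel ψ F z l t :=
    S.integrable.norm.mono' (hcont ψ l).aestronglyMeasurable (.of_forall fun t ↦ by
      rw [norm_mul, norm_e2pi, one_mul, hS])
  have hderiv := (hasDerivAt_integral_of_dominated_loc_of_deriv_le (μ := volume) (x₀ := l)
    (F := fun l t ↦ e2pi (-(ξ * t)) * diffKernel ψ F z l t)
    (F' := fun l t ↦ e2pi (-(ξ * t)) * ((l : ℂ)⁻¹ * diffKernel (dilationDeriv ψ) F z l t))
    (bound := fun t ↦ ‖F t‖ * (2 * SchwartzMap.seminorm ℝ 0 0 (dilationDeriv ψ)))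
    (Ioi_mem_nhds hl) (.of_forall fun s ↦ (hcont ψ s).aestronglyMeasurable) hint
    ?_ (.of_forall fun t s hs ↦ ?_) (F.integrable.norm.mul_const _)
    (.of_forall fun t s hs ↦ (hasDerivAt_diffKernel ψ F z (ne_of_gt hs) t).const_mul _)).2
  · simp_rw [fourier_eq_integral_e2pi_mul]
    refine hderiv.congr_deriv ?_
    simp_rw [mul_left_comm _ (l : ℂ)⁻¹]
    exact integral_const_mul _ _
  · simp_rw [mul_left_comm _ (l : ℂ)⁻¹]
    exact ((hcont (dilationDeriv ψ) l).const_mul _).aestronglyMeasurable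
  · rw [norm_mul, norm_e2pi, one_mul]
    exact norm_inv_mul_diffKernel_le _ F z (ne_of_gt hs)
      (SchwartzMap.norm_le_seminorm ℝ (dilationDeriv ψ)) t

lemma contDiffOn_fourier_diffKernel (ξ : ℝ) :
    ContDiffOn ℝ 1 (fun l ↦ 𝓕 (diffKernel ψ F z l) ξ) (Ioi 0) := by
  have hderiv (u : 𝓢(ℝ, ℂ)) {l : ℝ} (hl : l ∈ Ioi (0 : ℝ)) :=
    hasDerivAt_fourier_diffKernel u F z ξ hl
  rw [← zero_add (1 : WithTop ℕ∞), contDiffOn_succ_iff_deriv_of_isOpen isOpen_Ioi]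
  refine ⟨fun l hl ↦ (hderiv ψ hl).differentiableAt.differentiableWithinAt, by simp, ?_⟩
  rw [contDiffOn_zero]
  refine ContinuousOn.congr ?_ fun l hl ↦ (hderiv ψ hl).deriv
  refine (Complex.continuous_ofReal.continuousOn.inv₀ fun l hl ↦ ?_).mul fun l hl ↦
    (hderiv (dilationDeriv ψ) hl).continuousAt.continuousWithinAt
  exact mod_cast ne_of_gt hl

end DifferenceKernel

section SquareFunctionTail

open scoped SchwartzMap

variable (ψ F : 𝓢(ℝ, ℂ)) (z : ℝ) {l : ℝ}

lemma enorm_sq_fourier_diffKernel_le {L : ℝ} (hL : 0 < L) (ξ : ℝ) :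
    ‖𝓕 (diffKernel ψ F z L) ξ‖ₑ ^ 2 ≤ ∫⁻ l in Ioo L (L + L), ENNReal.ofReal (4 / l) *
      (‖𝓕 (diffKernel ψ F z l) ξ‖ₑ ^ 2 + ‖𝓕 (diffKernel (dilationDeriv ψ) F z l) ξ‖ₑ ^ 2) := by
  have hC : ContDiffOn ℝ 1 (fun l ↦ 𝓕 (diffKernel ψ F z l) ξ) (Icc L (L + L)) :=
    (contDiffOn_fourier_diffKernel ψ F z ξ).mono fun l hl ↦ hL.trans_le hl.1
  refine (enorm_sq_le_setLIntegral_sobolevDensity hL hC (l := id) fun l hl ↦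
    ⟨hl.1.le, hl.2.le.trans_eq (two_mul L).symm⟩).trans
    (setLIntegral_mono' measurableSet_Ioo fun l hl ↦ ?_)
  have hl0 : 0 < l := hL.trans hl.1
  have hcoeff : ENNReal.ofReal (2 * l) * ‖(l : ℂ)⁻¹‖ₑ ^ 2 ≤ ENNReal.ofReal (4 / l) := by
    rw [← ofReal_norm, ← ENNReal.ofReal_pow (norm_nonneg _), ← ENNReal.ofReal_mul (by positivity),
      norm_inv, Complex.norm_of_nonneg hl0.le]
    refine ENNReal.ofReal_le_ofReal ?_
    field_simp
    norm_num
  rw [sobolevDensity, (hasDerivAt_fourier_diffKernel ψ F z ξ hl0).deriv, enorm_mul, mul_pow,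
    ← mul_assoc, mul_add, id]
  gcongr

/-- Both sums over the intervals collapse: the Sobolev inequality in the scale variable removes
the dependence on the length of the interval, and the one in the frequency variable removes the
dependence on its endpoint. -/
theorem sum_enorm_sq_fourier_diffKernel_le {ι : Type*} [Fintype ι] {a b : ι → ℝ}
    (hab : ∀ m, a m < b m) (hdisj : Pairwise (Disjoint on fun m ↦ Ioo (a m) (b m))) :
    ∑ m, ‖𝓕 (diffKernel ψ F z (b m - a m)) (a m)‖ₑ ^ 2 ≤
      ∫⁻ l in Ioi 0, ENNReal.ofReal (4 / l) * ∫⁻ ξ, (sobolevDensity l (𝓕 (diffKernel ψ F z l)) ξ +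
        sobolevDensity l (𝓕 (diffKernel (dilationDeriv ψ) F z l)) ξ) := by
  have hfreq (u : 𝓢(ℝ, ℂ)) {L l : ℝ} (hL : 0 < L) (hl : l ∈ Ioo L (L + L)) (ξ : ℝ) :
      ‖𝓕 (diffKernel u F z l) ξ‖ₑ ^ 2 ≤
        ∫⁻ ξ in Ioo ξ (ξ + L), sobolevDensity l (𝓕 (diffKernel u F z l)) ξ := by
    obtain ⟨S, hS⟩ := exists_schwartzMap_eq_diffKernel u F z (hL.trans hl.1).ne'
    have hC : ContDiff ℝ 1 (𝓕 ⇑S) := (𝓕 S).smooth 1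
    rw [← hS]
    exact enorm_sq_le_setLIntegral_sobolevDensity hL hC.contDiffOn fun _ _ ↦
      ⟨hl.1.le, hl.2.le.trans_eq (two_mul L).symm⟩
  have hscale (m : ι) : ‖𝓕 (diffKernel ψ F z (b m - a m)) (a m)‖ₑ ^ 2 ≤
      ∫⁻ l in Ioi 0, ENNReal.ofReal (4 / l) * ∫⁻ ξ in Ioo (a m) (b m),
        (sobolevDensity l (𝓕 (diffKernel ψ F z l)) ξ +
          sobolevDensity l (𝓕 (diffKernel (dilationDeriv ψ) F z l)) ξ) := by
    have hL : 0 < b m - a m := sub_pos.2 (hab m)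
    refine (enorm_sq_fourier_diffKernel_le ψ F z hL (a m)).trans
      ((setLIntegral_mono' measurableSet_Ioo fun l hl ↦ ?_).trans
        (lintegral_mono_set fun l hl ↦ hL.trans hl.1))
    gcongr ENNReal.ofReal (4 / l) * ?_
    refine (add_le_add (hfreq ψ hL hl (a m)) (hfreq (dilationDeriv ψ) hL hl (a m))).trans ?_
    rw [add_sub_cancel]
    exact le_lintegral_add _ _
  refine (Finset.sum_le_sum fun m _ ↦ hscale m).trans
    ((sum_lintegral_le_lintegral_sum _ _ _).trans (lintegral_mono fun l ↦ ?_))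
  rw [← Finset.mul_sum]
  gcongr
  exact sum_setLIntegral_Ioo_le hdisj _ _

lemma exists_forall_norm_mul_le (u : 𝓢(ℝ, ℂ)) :
    ∃ C : ℝ, ∀ s, ‖u s‖ * (1 + 4 * s ^ 2) ^ 2 ≤ C := by
  have hgrowth : (fun s : ℝ ↦ (1 + 4 * s ^ 2) ^ 2).HasTemperateGrowth := by fun_prop
  refine ⟨SchwartzMap.seminorm ℝ 0 0
    (SchwartzMap.smulLeftCLM ℂ (fun s : ℝ ↦ (1 + 4 * s ^ 2) ^ 2) u), fun s ↦ ?_⟩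
  refine le_trans ?_ (SchwartzMap.norm_le_seminorm ℝ _ s)
  rw [SchwartzMap.smulLeftCLM_apply_apply hgrowth, norm_smul, Real.norm_of_nonneg (by positivity),
    mul_comm]

variable {ψ z} {C r t : ℝ}

lemma one_add_sq_le_of_abs_add_le {s : ℝ} (hs : |s + l * t| ≤ l * r) (hl : 0 < l)
    (ht : 2 * r ≤ |t|) : 1 + (l * t) ^ 2 ≤ 1 + 4 * s ^ 2 := by
  have habs : |l * t| = l * |t| := by rw [abs_mul, abs_of_pos hl]
  have htri : |l * t| ≤ |s + l * t| + |s| := by simpa using abs_sub (s + l * t) s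
  have hle : |l * t| ≤ |2 * s| := by
    rw [habs, abs_mul, abs_two]
    nlinarith
  linarith [sq_le_sq.2 hle]

lemma norm_sub_le_of_norm_deriv_mul_le (hC : ∀ s, ‖deriv ψ s‖ * (1 + 4 * s ^ 2) ^ 2 ≤ C)
    (hz : |z| ≤ r) (ht : 2 * r ≤ |t|) (hl : 0 < l) :
    ‖ψ (l * (z - t)) - ψ (-(l * t))‖ ≤ C / (1 + (l * t) ^ 2) ^ 2 * (l * r) := by
  have hsub : l * (z - t) - -(l * t) = l * z := by ring
  have hlz : |l * z| ≤ l * r := by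
    rw [abs_mul, abs_of_pos hl]
    gcongr
  have hC0 : 0 ≤ C := le_trans (by positivity) (hC 0)
  have hderiv : ∀ s ∈ uIcc (-(l * t)) (l * (z - t)),
      ‖deriv ψ s‖ ≤ C / (1 + (l * t) ^ 2) ^ 2 := by
    intro s hs
    have hs' : |s + l * t| ≤ l * r := by
      have := abs_sub_left_of_mem_uIcc hs
      rw [hsub, sub_neg_eq_add] at this
      exact this.trans hlz
    rw [le_div_iff₀ (by positivity)]
    refine le_trans ?_ (hC s)
    gcongr ‖deriv ψ s‖ * ?_ ^ 2
    exact one_add_sq_le_of_abs_add_le hs' hl ht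
  refine ((convex_uIcc _ _).norm_image_sub_le_of_norm_deriv_le (fun s _ ↦ ψ.differentiableAt)
    hderiv left_mem_uIcc right_mem_uIcc).trans ?_
  rw [hsub, Real.norm_eq_abs]
  gcongr

lemma weight_mul_sq_le (ht : t ≠ 0) (hl : 0 < l) {d : ℝ} (hd0 : 0 ≤ d)
    (hd : d ≤ C / (1 + (l * t) ^ 2) ^ 2 * (l * r)) :
    4 / l * (4 / l + 8 * π ^ 2 * l * t ^ 2) * (l * d) ^ 2 ≤
      32 * π ^ 2 * C ^ 2 * r ^ 2 / t ^ 2 * (1 + (l * t) ^ 2)⁻¹ := by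
  set w := 1 + (l * t) ^ 2
  have hw1 : 1 ≤ w := le_add_of_nonneg_right (sq_nonneg _)
  have hcoeff : 16 + 32 * π ^ 2 * (l * t) ^ 2 ≤ 32 * π ^ 2 * w := by
    nlinarith [Real.pi_gt_three]
  have hlr : (l * r) ^ 2 ≤ r ^ 2 / t ^ 2 * w := by
    rw [div_mul_eq_mul_div, le_div_iff₀ (by positivity)]
    nlinarith [sq_nonneg r]
  calc 4 / l * (4 / l + 8 * π ^ 2 * l * t ^ 2) * (l * d) ^ 2
      = (16 + 32 * π ^ 2 * (l * t) ^ 2) * d ^ 2 := by field_simp; ring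
    _ ≤ 32 * π ^ 2 * w * (C / w ^ 2 * (l * r)) ^ 2 := by gcongr
    _ = 32 * π ^ 2 * w * (C ^ 2 / w ^ 4 * (l * r) ^ 2) := by
      rw [mul_pow, div_pow, ← pow_mul]
    _ ≤ 32 * π ^ 2 * w * (C ^ 2 / w ^ 4 * (r ^ 2 / t ^ 2 * w)) := by gcongr
    _ = 32 * π ^ 2 * C ^ 2 * r ^ 2 / t ^ 2 * (w ^ 2)⁻¹ := by field_simp
    _ ≤ 32 * π ^ 2 * C ^ 2 * r ^ 2 / t ^ 2 * w⁻¹ := by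
      gcongr
      exact le_self_pow₀ hw1 two_ne_zero

lemma ofReal_mul_enorm_sq_diffKernel_le (hC : ∀ s, ‖deriv ψ s‖ * (1 + 4 * s ^ 2) ^ 2 ≤ C)
    (hz : |z| ≤ r) (hr : 0 < r) (hF : ∀ t, |t| < 2 * r → F t = 0) (hl : 0 < l) (t : ℝ) :
    ENNReal.ofReal (4 / l) *
        (ENNReal.ofReal (4 / l + 8 * π ^ 2 * l * t ^ 2) * ‖diffKernel ψ F z l t‖ₑ ^ 2) ≤
      ‖F t‖ₑ ^ 2 *
        ENNReal.ofReal (32 * π ^ 2 * C ^ 2 * r ^ 2 / t ^ 2 * (1 + (l * t) ^ 2)⁻¹) := by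
  obtain ht | ht := lt_or_ge |t| (2 * r)
  · simp [diffKernel, hF t ht]
  have ht0 : t ≠ 0 := abs_pos.1 (by linarith)
  set d := ‖ψ (l * (z - t)) - ψ (-(l * t))‖
  have hker : ‖diffKernel ψ F z l t‖ₑ ^ 2 = ‖F t‖ₑ ^ 2 * ENNReal.ofReal ((l * d) ^ 2) := by
    rw [diffKernel, enorm_mul, mul_pow, ← ofReal_norm (_ * _), norm_mul,
      Complex.norm_of_nonneg hl.le, ENNReal.ofReal_pow (by positivity)]
  rw [hker, mul_left_comm (ENNReal.ofReal (4 / l + _)), mul_left_comm, ← mul_assoc,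
    ← mul_assoc, mul_assoc (‖F t‖ₑ ^ 2), ← ENNReal.ofReal_mul (by positivity),
    mul_assoc (‖F t‖ₑ ^ 2), ← ENNReal.ofReal_mul (by positivity)]
  gcongr ‖F t‖ₑ ^ 2 * ENNReal.ofReal ?_
  exact weight_mul_sq_le ht0 hl (norm_nonneg _)
    (norm_sub_le_of_norm_deriv_mul_le hC hz ht hl)

lemma setLIntegral_Ioi_inv_one_add_sq_le (ht : t ≠ 0) :
    ∫⁻ l in Ioi (0 : ℝ), ENNReal.ofReal (1 + (l * t) ^ 2)⁻¹ ≤ ENNReal.ofReal (π / |t|) := by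
  have hint : Integrable fun l : ℝ ↦ (1 + (l * t) ^ 2)⁻¹ :=
    integrable_inv_one_add_sq.comp_mul_right' ht
  refine (setLIntegral_le_lintegral _ _).trans ?_
  rw [← ofReal_integral_eq_lintegral_ofReal hint (.of_forall fun l ↦ by positivity),
    Measure.integral_comp_mul_right (fun x : ℝ ↦ (1 + x ^ 2)⁻¹) t, integral_univ_inv_one_add_sq,
    abs_inv, smul_eq_mul, mul_comm, div_eq_mul_inv]

lemma lintegral_sobolevDensity_fourier_diffKernel_le
    (hC : ∀ s, ‖deriv ψ s‖ * (1 + 4 * s ^ 2) ^ 2 ≤ C) (hz : |z| ≤ r) (hr : 0 < r)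
    (hF : ∀ t, |t| < 2 * r → F t = 0) (hl : 0 < l) :
    ENNReal.ofReal (4 / l) * ∫⁻ ξ, sobolevDensity l (𝓕 (diffKernel ψ F z l)) ξ ≤
      ∫⁻ t, ‖F t‖ₑ ^ 2 *
        ENNReal.ofReal (32 * π ^ 2 * C ^ 2 * r ^ 2 / t ^ 2 * (1 + (l * t) ^ 2)⁻¹) := by
  obtain ⟨S, hS⟩ := exists_schwartzMap_eq_diffKernel ψ F z hl.ne'
  rw [← hS, lintegral_sobolevDensity_fourier S hl.le, hS,
    ← lintegral_const_mul' _ _ ENNReal.ofReal_ne_top]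
  exact lintegral_mono (ofReal_mul_enorm_sq_diffKernel_le F hC hz hr hF hl)

lemma lintegral_lintegral_inv_one_add_sq_le (hr : 0 < r) (hF : ∀ t, |t| < 2 * r → F t = 0) :
    ∫⁻ l in Ioi (0 : ℝ), ∫⁻ t, ‖F t‖ₑ ^ 2 *
        ENNReal.ofReal (32 * π ^ 2 * C ^ 2 * r ^ 2 / t ^ 2 * (1 + (l * t) ^ 2)⁻¹) ≤
      ENNReal.ofReal (16 * π ^ 3 * C ^ 2 * r) * ∫⁻ t, ‖F t‖ₑ ^ 2 * ENNReal.ofReal (t ^ 2)⁻¹ := by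
  have : Measurable F := F.continuous.measurable
  rw [lintegral_lintegral_swap (by unfold Function.uncurry; fun_prop),
    ← lintegral_const_mul' _ _ ENNReal.ofReal_ne_top]
  refine lintegral_mono fun t ↦ ?_
  obtain ht | ht := lt_or_ge |t| (2 * r)
  · simp [hF t ht]
  have ht0 : 0 < |t| := by linarith
  have hfactor (l : ℝ) : ENNReal.ofReal (32 * π ^ 2 * C ^ 2 * r ^ 2 / t ^ 2 * (1 + (l * t) ^ 2)⁻¹) =
      ENNReal.ofReal (32 * π ^ 2 * C ^ 2 * r ^ 2 / t ^ 2) * ENNReal.ofReal (1 + (l * t) ^ 2)⁻¹ :=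
    ENNReal.ofReal_mul (by positivity)
  simp_rw [hfactor]
  rw [lintegral_const_mul' _ _ (by finiteness), lintegral_const_mul' _ _ ENNReal.ofReal_ne_top,
    mul_left_comm (ENNReal.ofReal (16 * π ^ 3 * C ^ 2 * r))]
  gcongr ‖F t‖ₑ ^ 2 * ?_
  calc _ ≤ ENNReal.ofReal (32 * π ^ 2 * C ^ 2 * r ^ 2 / t ^ 2) * ENNReal.ofReal (π / |t|) := by
        gcongr
        exact setLIntegral_Ioi_inv_one_add_sq_le (abs_pos.1 ht0)
    _ = ENNReal.ofReal (32 * π ^ 3 * C ^ 2 * r * (t ^ 2)⁻¹ * (r / |t|)) := by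
        rw [← ENNReal.ofReal_mul (by positivity)]
        ring_nf
    _ ≤ ENNReal.ofReal (32 * π ^ 3 * C ^ 2 * r * (t ^ 2)⁻¹ * 2⁻¹) := by
        gcongr
        rw [div_le_iff₀ ht0]
        linarith
    _ = _ := by
        rw [← ENNReal.ofReal_mul (by positivity)]
        ring_nf

theorem sum_enorm_sq_fourier_diffKernel_le_lintegral {ι : Type*} [Fintype ι] {a b : ι → ℝ}
    (hab : ∀ m, a m < b m) (hdisj : Pairwise (Disjoint on fun m ↦ Ioo (a m) (b m)))
    (hC : ∀ s, ‖deriv ψ s‖ * (1 + 4 * s ^ 2) ^ 2 ≤ C)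
    (hC' : ∀ s, ‖deriv (dilationDeriv ψ) s‖ * (1 + 4 * s ^ 2) ^ 2 ≤ C)
    (hz : |z| ≤ r) (hr : 0 < r) (hF : ∀ t, |t| < 2 * r → F t = 0) :
    ∑ m, ‖𝓕 (diffKernel ψ F z (b m - a m)) (a m)‖ₑ ^ 2 ≤
      2 * (ENNReal.ofReal (16 * π ^ 3 * C ^ 2 * r) *
        ∫⁻ t, ‖F t‖ₑ ^ 2 * ENNReal.ofReal (t ^ 2)⁻¹) := by
  refine (sum_enorm_sq_fourier_diffKernel_le ψ F z hab hdisj).trans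
    (le_trans ?_ (mul_le_mul_right (lintegral_lintegral_inv_one_add_sq_le F hr hF) 2))
  rw [← lintegral_const_mul' _ _ (by finiteness)]
  refine setLIntegral_mono' measurableSet_Ioi fun l (hl : 0 < l) ↦ ?_
  obtain ⟨S, hS⟩ := exists_schwartzMap_eq_diffKernel ψ F z hl.ne'
  have hmeas : Measurable (sobolevDensity l (𝓕 (diffKernel ψ F z l))) :=
    hS ▸ measurable_sobolevDensity (𝓕 S).continuous l
  rw [lintegral_add_left hmeas, mul_add, two_mul]
  exact add_le_add (lintegral_sobolevDensity_fourier_diffKernel_le F hC hz hr hF hl)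
    (lintegral_sobolevDensity_fourier_diffKernel_le F hC' hz hr hF hl)

end SquareFunctionTail

section VectorValuedPieces

open Metric
open Module (finrank finrank_self)
open scoped SchwartzMap

theorem exists_add_eq_of_ball {E F : Type*} [NormedAddCommGroup E] [NormedSpace ℝ E]
    [FiniteDimensional ℝ E] [NormedAddCommGroup F] [NormedSpace ℝ F] (f : 𝓢(E, F)) (c : E)
    {r R : ℝ} (hr : 0 < r) (hR : r < R) :
    ∃ g h : 𝓢(E, F), g + h = f ∧ (∀ t, ‖g t‖ ≤ ‖f t‖) ∧ (∀ t, ‖h t‖ ≤ ‖f t‖) ∧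
      (∀ t ∉ ball c R, g t = 0) ∧ ∀ t ∈ ball c r, h t = 0 := by
  let χ : ContDiffBump c := ⟨r, R, hr, hR⟩
  have hsupp : HasCompactSupport fun t ↦ χ t • f t := χ.hasCompactSupport.smul_right
  have hsmooth : ContDiff ℝ (⊤ : ℕ∞) fun t ↦ χ t • f t := χ.contDiff.smul (f.smooth _)
  set g : 𝓢(E, F) := hsupp.toSchwartzMap hsmooth
  have hg (t : E) : g t = χ t • f t := rfl
  have hh (t : E) : (f - g) t = (1 - χ t) • f t := by rw [sub_apply, hg, sub_smul, one_smul]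
  refine ⟨g, f - g, add_sub_cancel g f, fun t ↦ ?_, fun t ↦ ?_, fun t ht ↦ ?_, fun t ht ↦ ?_⟩
  · rw [hg, norm_smul, Real.norm_of_nonneg χ.nonneg]
    exact mul_le_of_le_one_left (norm_nonneg _) χ.le_one
  · rw [hh, norm_smul, Real.norm_of_nonneg (sub_nonneg.2 χ.le_one)]
    exact mul_le_of_le_one_left (norm_nonneg _) (sub_le_self 1 χ.nonneg)
  · rw [hg, χ.zero_of_le_dist (not_lt.1 ht), zero_smul]
  · rw [hh, χ.one_of_mem_closedBall (ball_subset_closedBall ht), sub_self, zero_smul]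

lemma enorm_sq_eq_sum {𝕜 ι : Type*} [RCLike 𝕜] [Fintype ι] (v : EuclideanSpace 𝕜 ι) :
    ‖v‖ₑ ^ 2 = ∑ m, ‖v m‖ₑ ^ 2 := by
  simp_rw [← ofReal_norm, ← ENNReal.ofReal_pow (norm_nonneg _), EuclideanSpace.norm_sq_eq]
  exact ENNReal.ofReal_sum_of_nonneg fun m _ ↦ by positivity

lemma enorm_e2pi_mul (t : ℝ) (z : ℂ) : ‖e2pi t * z‖ₑ = ‖z‖ₑ := by
  rw [enorm_mul, ← ofReal_norm (e2pi t), norm_e2pi, ENNReal.ofReal_one, one_mul]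

lemma enorm_rotConv (φ f : ℝ → ℂ) (a b x : ℝ) :
    ‖rotConv φ a b f x‖ₑ = ‖conv f (phim φ a b) x‖ₑ :=
  enorm_e2pi_mul _ _

lemma integrable_mul_phim (φ f : 𝓢(ℝ, ℂ)) {a b : ℝ} (hab : a < b) (x : ℝ) :
    Integrable fun t ↦ f t * phim φ a b (x - t) := by
  obtain ⟨Φ, hΦ⟩ := exists_schwartzMap_eq_phim φ hab
  obtain ⟨Ψ, hΨ⟩ := exists_schwartzMap_comp_affine Φ (neg_ne_zero.2 one_ne_zero) x
  refine (SchwartzMap.pairing (ContinuousLinearMap.mul ℂ ℂ) f Ψ).integrable.congr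
    (.of_forall fun t ↦ ?_)
  rw [SchwartzMap.pairing_apply_apply, ContinuousLinearMap.mul_apply', hΨ, ← hΦ]
  ring_nf

lemma rotConv_add (φ f g : 𝓢(ℝ, ℂ)) {a b : ℝ} (hab : a < b) (x : ℝ) :
    rotConv φ a b ⇑(f + g) x = rotConv φ a b f x + rotConv φ a b g x := by
  simp only [rotConv, conv, add_apply, add_mul]
  rw [integral_add (integrable_mul_phim φ f hab x) (integrable_mul_phim φ g hab x), mul_add]

lemma rotConv_sub_rotConv (φ : 𝓢(ℝ, ℂ)) {f F : 𝓢(ℝ, ℂ)} {c : ℝ} (hF : ∀ t, F t = f (c + t))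
    {a b : ℝ} (hab : a < b) (x : ℝ) :
    rotConv φ a b f x - rotConv φ a b f c =
      e2pi (-(a * c)) * 𝓕 (diffKernel φ F (x - c) (b - a)) a := by
  rw [rotConv, rotConv, conv, conv, ← integral_const_mul, ← integral_const_mul,
    ← integral_sub ((integrable_mul_phim φ f hab x).const_mul _)
      ((integrable_mul_phim φ f hab c).const_mul _), ← integral_add_left_eq_self _ c,
    fourier_eq_integral_e2pi_mul, ← integral_const_mul]
  have hphase (y t : ℝ) :
      e2pi (-(a * y)) * e2pi (a * (y - (c + t))) = e2pi (-(a * c)) * e2pi (-(a * t)) := by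
    rw [← e2pi_add, ← e2pi_add]
    ring_nf
  have hpiece (y t : ℝ) : e2pi (-(a * y)) * (f (c + t) * phim φ a b (y - (c + t))) =
      e2pi (-(a * c)) * (e2pi (-(a * t)) * (F t * ((b - a : ℝ) * φ ((b - a) * (y - c - t))))) := by
    rw [phim, hF, ← mul_assoc (e2pi (-(a * c))), ← hphase y, sub_sub]
    ring
  congr 1 with t
  rw [hpiece, hpiece, diffKernel, sub_self, zero_sub, mul_neg]
  ring

variable {ι : Type*}

/-- The pieces of `f` on the intervals `[a m, b m]`, each moved to the origin in frequency,
assembled into one function with values in a Euclidean space. -/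
noncomputable def rotPieces (φ : ℝ → ℂ) (a b : ι → ℝ) (f : ℝ → ℂ) (x : ℝ) : EuclideanSpace ℂ ι :=
  WithLp.toLp 2 fun m ↦ rotConv φ (a m) (b m) f x

variable {φ : 𝓢(ℝ, ℂ)} {a b : ι → ℝ}

lemma rotPieces_add (hab : ∀ m, a m < b m) (f g : 𝓢(ℝ, ℂ)) (x : ℝ) :
    rotPieces φ a b ⇑(f + g) x = rotPieces φ a b f x + rotPieces φ a b g x := by
  ext m
  exact rotConv_add φ f g (hab m) x

lemma continuous_rotPieces (hab : ∀ m, a m < b m) (f : 𝓢(ℝ, ℂ)) :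
    Continuous (rotPieces φ a b f) := by
  refine (PiLp.continuous_toLp 2 _).comp (continuous_pi fun m ↦ ?_)
  obtain ⟨g, hg, -⟩ := exists_schwartzMap_eq_conv_phim φ f (hab m)
  simp only [rotConv, ← hg]
  exact (continuous_e2pi.comp (by fun_prop)).mul g.continuous

variable [Fintype ι]

lemma enorm_sq_rotPieces (φ : ℝ → ℂ) (a b : ι → ℝ) (f : ℝ → ℂ) (x : ℝ) :
    ‖rotPieces φ a b f x‖ₑ ^ 2 = ∑ m, ‖conv f (phim φ (a m) (b m)) x‖ₑ ^ 2 := by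
  simp_rw [enorm_sq_eq_sum, rotPieces, enorm_rotConv]

lemma memLp_rotPieces (hab : ∀ m, a m < b m) (f : 𝓢(ℝ, ℂ)) (p : ℝ≥0∞) :
    MemLp (rotPieces φ a b f) p := by
  refine MemLp.of_eval_piLp fun m ↦ ?_
  obtain ⟨g, hg, -⟩ := exists_schwartzMap_eq_conv_phim φ f (hab m)
  have hcont : Continuous fun x ↦ rotPieces φ a b f x m :=
    (EuclideanSpace.proj m).continuous.comp (continuous_rotPieces hab f)
  refine (g.memLp p).congr_norm hcont.aestronglyMeasurable (.of_forall fun x ↦ ?_)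
  rw [← toReal_enorm, ← toReal_enorm, hg]
  exact congrArg _ (enorm_rotConv φ f (a m) (b m) x).symm

lemma lintegral_enorm_sq_mul_inv_dist_sq_le {F : Type*} [NormedAddCommGroup F] {f : ℝ → F}
    {c y r : ℝ} (hf : ∀ t ∈ ball c r, f t = 0) (hy : y ∈ ball c r) :
    ∫⁻ t, ‖f t‖ₑ ^ 2 * ENNReal.ofReal (dist t c ^ 2)⁻¹ ≤
      ENNReal.ofReal r⁻¹ * (8 * maximalFunction volume (‖f ·‖ₑ ^ 2) y) := by
  have hsupp : (fun t ↦ ‖f t‖ₑ ^ 2 * ENNReal.ofReal (dist t c ^ 2)⁻¹).support ⊆ (ball c r)ᶜ :=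
    fun t ht hball ↦ ht (by simp [hf t hball])
  have hconst : (2 : ℝ≥0∞) ^ (finrank ℝ ℝ + 1) * volume (ball (0 : ℝ) 1) = 8 := by
    rw [finrank_self, Real.volume_ball, mul_one, ENNReal.ofReal_ofNat]
    norm_num
  have h := setLIntegral_compl_ball_mul_inv_le (μ := volume) (‖f ·‖ₑ ^ 2) hy
  rwa [hconst, finrank_self, setLIntegral_eq_of_support_subset hsupp] at h

lemma enorm_sq_rotPieces_sub_le (hab : ∀ m, a m < b m)
    (hdisj : Pairwise (Disjoint on fun m ↦ Ioo (a m) (b m))) {C : ℝ}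
    (hC : ∀ s, ‖deriv φ s‖ * (1 + 4 * s ^ 2) ^ 2 ≤ C)
    (hC' : ∀ s, ‖deriv (dilationDeriv φ) s‖ * (1 + 4 * s ^ 2) ^ 2 ≤ C)
    {f : 𝓢(ℝ, ℂ)} {c x y r : ℝ} (hf : ∀ t ∈ ball c (2 * r), f t = 0) (hx : x ∈ ball c r)
    (hy : y ∈ ball c r) :
    ‖rotPieces φ a b f x - rotPieces φ a b f c‖ₑ ^ 2 ≤
      ENNReal.ofReal (128 * π ^ 3 * C ^ 2) * maximalFunction volume (‖f ·‖ₑ ^ 2) y := by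
  have hr : 0 < r := dist_nonneg.trans_lt hx
  obtain ⟨F, hF'⟩ := exists_schwartzMap_comp_affine f one_ne_zero c
  have hF (t : ℝ) : F t = f (c + t) := by rw [hF', one_mul, add_comm]
  have hF0 (t : ℝ) (ht : |t| < 2 * r) : F t = 0 := by
    rw [hF, hf]
    rwa [mem_ball, dist_self_add_left]
  have hpiece (m : ι) : ‖(rotPieces φ a b f x - rotPieces φ a b f c) m‖ₑ =
      ‖𝓕 (diffKernel φ F (x - c) (b m - a m)) (a m)‖ₑ :=
    (congrArg _ (rotConv_sub_rotConv φ hF (hab m) x)).trans (enorm_e2pi_mul _ _)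
  have htranslate : ∫⁻ t, ‖F t‖ₑ ^ 2 * ENNReal.ofReal (t ^ 2)⁻¹ =
      ∫⁻ t, ‖f t‖ₑ ^ 2 * ENNReal.ofReal (dist t c ^ 2)⁻¹ := by
    rw [← lintegral_add_left_eq_self (fun t ↦ ‖f t‖ₑ ^ 2 * _) c]
    simp only [hF, dist_self_add_left, norm_eq_abs, sq_abs]
  simp_rw [enorm_sq_eq_sum, hpiece]
  calc _ ≤ 2 * (ENNReal.ofReal (16 * π ^ 3 * C ^ 2 * r) *
        ∫⁻ t, ‖F t‖ₑ ^ 2 * ENNReal.ofReal (t ^ 2)⁻¹) :=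
        sum_enorm_sq_fourier_diffKernel_le_lintegral F hab hdisj hC hC'
          (by simpa [dist_eq] using (mem_ball.1 hx).le) hr hF0
    _ ≤ 2 * (ENNReal.ofReal (16 * π ^ 3 * C ^ 2 * r) *
        (ENNReal.ofReal (2 * r)⁻¹ * (8 * maximalFunction volume (‖f ·‖ₑ ^ 2) y))) := by
      rw [htranslate]
      gcongr
      exact lintegral_enorm_sq_mul_inv_dist_sq_le hf (ball_subset_ball (by linarith) hy)
    _ = _ := by
      rw [← ENNReal.ofReal_ofNat 2, ← ENNReal.ofReal_ofNat 8]
      simp only [← mul_assoc]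
      rw [mul_assoc (ENNReal.ofReal 2), mul_assoc (ENNReal.ofReal 2),
        ← ENNReal.ofReal_mul (by positivity), ← ENNReal.ofReal_mul (by positivity),
        ← ENNReal.ofReal_mul (by positivity)]
      congr 2
      field_simp
      ring

lemma lintegral_enorm_sq_rotPieces_le (hab : ∀ m, a m < b m)
    (hdisj : Pairwise (Disjoint on fun m ↦ Ioo (a m) (b m))) (hφ : support (𝓕 ⇑φ) ⊆ Ioo 0 1)
    {M : ℝ≥0∞} (hM : ∀ η, ‖𝓕 (⇑φ) η‖ₑ ≤ M) {f : 𝓢(ℝ, ℂ)} {c y r : ℝ}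
    (hf : ∀ t ∉ ball c (4 * r), f t = 0) (hy : y ∈ ball c r) :
    ∫⁻ x, ‖rotPieces φ a b f x‖ₑ ^ 2 ≤
      4 * M ^ 2 * (volume (ball c r) * maximalFunction volume (‖f ·‖ₑ ^ 2) y) := by
  have hr : 0 < r := dist_nonneg.trans_lt hy
  have hsupp : (fun t ↦ ‖f t‖ₑ ^ 2).support ⊆ ball c (4 * r) :=
    fun t ht ↦ not_imp_comm.1 (hf t) (by simpa using ht)
  simp_rw [enorm_sq_rotPieces]
  calc _ ≤ M ^ 2 * ∫⁻ t in ball c (4 * r), ‖f t‖ₑ ^ 2 := by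
        rw [setLIntegral_eq_of_support_subset hsupp]
        exact lintegral_sum_enorm_sq_conv_phim_le hab hdisj hφ hM f
    _ ≤ M ^ 2 * (maximalFunction volume (‖f ·‖ₑ ^ 2) y * volume (ball c (4 * r))) := by
      grw [setLIntegral_ball_le_maximalFunction_mul _ (ball_subset_ball (by linarith) hy)]
    _ = _ := by
      rw [measure_ball_mul_radius volume zero_lt_four c r, finrank_self, pow_one,
        ENNReal.ofReal_ofNat]
      ring

/-- Near the ball the pieces are controlled by Plancherel, and the contribution of the far part of
`f` is almost constant on the ball. -/
theorem meanSqOscillationLE_rotPieces (hab : ∀ m, a m < b m)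
    (hdisj : Pairwise (Disjoint on fun m ↦ Ioo (a m) (b m))) (hφ : support (𝓕 ⇑φ) ⊆ Ioo 0 1)
    {M : ℝ≥0∞} (hM : ∀ η, ‖𝓕 (⇑φ) η‖ₑ ≤ M) {C : ℝ}
    (hC : ∀ s, ‖deriv φ s‖ * (1 + 4 * s ^ 2) ^ 2 ≤ C)
    (hC' : ∀ s, ‖deriv (dilationDeriv φ) s‖ * (1 + 4 * s ^ 2) ^ 2 ≤ C) (f : 𝓢(ℝ, ℂ)) :
    MeanSqOscillationLE volume (rotPieces φ a b f) fun y ↦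
      (8 * M ^ 2 + ENNReal.ofReal (256 * π ^ 3 * C ^ 2)) *
        maximalFunction volume (‖f ·‖ₑ ^ 2) y := by
  intro c r hr
  obtain ⟨g, h, rfl, hg, hh, hg0, hh0⟩ :=
    exists_add_eq_of_ball f c (r := 2 * r) (R := 4 * r) (by positivity) (by linarith)
  refine ⟨rotPieces φ a b h c, fun y hy ↦ ?_⟩
  set Mf := maximalFunction volume (‖(g + h) ·‖ₑ ^ 2) y
  have hmono (u : 𝓢(ℝ, ℂ)) (hu : ∀ t, ‖u t‖ ≤ ‖(g + h) t‖) :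
      maximalFunction volume (‖u ·‖ₑ ^ 2) y ≤ Mf :=
    maximalFunction_mono (fun t ↦ pow_le_pow_left₀ zero_le (enorm_le_iff_norm_le.2 (hu t)) 2) y
  have hnear : ∫⁻ x, ‖rotPieces φ a b g x‖ₑ ^ 2 ≤ 4 * M ^ 2 * (volume (ball c r) * Mf) := by
    grw [lintegral_enorm_sq_rotPieces_le hab hdisj hφ hM hg0 hy, hmono g hg]
  have hfar (x : ℝ) (hx : x ∈ ball c r) : ‖rotPieces φ a b h x - rotPieces φ a b h c‖ₑ ^ 2 ≤
      ENNReal.ofReal (128 * π ^ 3 * C ^ 2) * Mf := by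
    grw [enorm_sq_rotPieces_sub_le hab hdisj hC hC' hh0 hx hy, hmono h hh]
  calc _ ≤ ∫⁻ x in ball c r, (2 * ‖rotPieces φ a b g x‖ₑ ^ 2 +
          2 * (ENNReal.ofReal (128 * π ^ 3 * C ^ 2) * Mf)) := by
        refine setLIntegral_mono' measurableSet_ball fun x hx ↦ ?_
        rw [rotPieces_add hab, add_sub_assoc]
        grw [enorm_add_sq_le, hfar x hx]
    _ ≤ 2 * (4 * M ^ 2 * (volume (ball c r) * Mf)) +
          2 * (ENNReal.ofReal (128 * π ^ 3 * C ^ 2) * Mf) * volume (ball c r) := by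
      rw [lintegral_add_right _ measurable_const, setLIntegral_const,
        lintegral_const_mul' _ _ ENNReal.ofNat_ne_top]
      gcongr
      exact (setLIntegral_le_lintegral _ _).trans hnear
    _ = _ := by
      rw [show 256 * π ^ 3 * C ^ 2 = 2 * (128 * π ^ 3 * C ^ 2) by ring,
        ENNReal.ofReal_mul zero_le_two, ENNReal.ofReal_ofNat]
      ring

end VectorValuedPieces

section SquareFunction

open scoped SchwartzMap

universe u

lemma exists_forall_enorm_fourier_le (φ : 𝓢(ℝ, ℂ)) :
    ∃ M : ℝ≥0∞, M ≠ ∞ ∧ ∀ η, ‖𝓕 (⇑φ) η‖ₑ ≤ M :=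
  ⟨_, ENNReal.ofReal_ne_top, fun η ↦ by
    rw [← ofReal_norm, ← SchwartzMap.fourier_coe]
    exact ENNReal.ofReal_le_ofReal (SchwartzMap.norm_le_seminorm ℝ (𝓕 φ) η)⟩

lemma lintegral_enorm_sq_rpow_ne_top {E F : Type*} [MeasurableSpace E] {μ : Measure E}
    [NormedAddCommGroup F] {G : E → F} {q : ℝ} (hq : 0 < q)
    (hG : MemLp G (ENNReal.ofReal (2 * q)) μ) : ∫⁻ x, (‖G x‖ₑ ^ 2) ^ q ∂μ ≠ ∞ := by
  have h := lintegral_rpow_enorm_lt_top_of_eLpNorm_lt_top (by positivity) ENNReal.ofReal_ne_top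
    hG.eLpNorm_lt_top
  rw [ENNReal.toReal_ofReal (by positivity)] at h
  simpa only [ENNReal.rpow_mul, ENNReal.rpow_ofNat] using h.ne

lemma lintegral_enorm_sq_rotPieces_rpow_le {ι : Type*} [Fintype ι] {φ f : 𝓢(ℝ, ℂ)} {a b : ι → ℝ}
    (hab : ∀ m, a m < b m) {K : ℝ≥0∞} (hosc : MeanSqOscillationLE volume (rotPieces φ a b f)
      fun y ↦ K * maximalFunction volume (‖f ·‖ₑ ^ 2) y) {q : ℝ} (hq : 1 < q) :
    ∫⁻ x, (‖rotPieces φ a b f x‖ₑ ^ 2) ^ q ≤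
      2 * ((64 * (100 * 64 ^ q)) ^ q * K ^ q) *
        (10 * ENNReal.ofReal (q / (q - 1)) * 2 ^ (q - 1)) * ∫⁻ x, (‖f x‖ₑ ^ 2) ^ q := by
  have hq0 : 0 < q := by positivity
  have hcont := continuous_rotPieces (φ := φ) hab f
  have hmax := measurable_maximalFunction (μ := volume) (‖f ·‖ₑ ^ 2)
  have hL2 : ∫⁻ x, ‖rotPieces φ a b f x‖ₑ ^ 2 ≠ ∞ := by
    simpa using lintegral_enorm_sq_rpow_ne_top one_pos (memLp_rotPieces (φ := φ) hab f _)
  have hLq := lintegral_enorm_sq_rpow_ne_top hq0 (memLp_rotPieces (φ := φ) hab f _)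
  have hFS := lintegral_maximalFunction_rpow_le_of_meanSqOscillationLE hcont.stronglyMeasurable
    (hmax.const_mul K).aemeasurable hosc hL2 hq hLq
  have hHL := lintegral_maximalFunction_rpow_le (μ := volume) hq
    (f := (‖f ·‖ₑ ^ 2)) (f.continuous.enorm.measurable.pow_const 2)
  have h4 : (4 : ℝ≥0∞) * 16 = 64 := by norm_num
  have h50 : (2 : ℝ≥0∞) * 50 = 100 := by norm_num
  have h5 : (2 : ℝ≥0∞) * 5 = 10 := by norm_num
  simp only [Module.finrank_self, pow_one, h4, h50] at hFS
  simp only [Module.finrank_self, pow_one, h5] at hHL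
  calc _ ≤ ∫⁻ x, maximalFunction volume (‖rotPieces φ a b f ·‖ₑ ^ 2) x ^ q := by
        gcongr with x
        exact le_maximalFunction
          ((ENNReal.continuous_pow 2).comp hcont.enorm).lowerSemicontinuous x
    _ ≤ _ := hFS
    _ ≤ _ := by
      simp_rw [ENNReal.mul_rpow_of_nonneg K _ hq0.le]
      rw [lintegral_const_mul _ (hmax.pow_const q)]
      grw [hHL]
      exact le_of_eq (by ring)

theorem exists_lintegral_sum_enorm_sq_conv_phim_rpow_le {φ : 𝓢(ℝ, ℂ)}
    (hφ : support (𝓕 ⇑φ) ⊆ Ioo 0 1) {q : ℝ} (hq : 1 ≤ q) :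
    ∃ C : ℝ≥0∞, C ≠ ∞ ∧ ∀ (ι : Type u) [Fintype ι] (a b : ι → ℝ), (∀ m, a m < b m) →
      Pairwise (Disjoint on fun m ↦ Ioo (a m) (b m)) → ∀ f : 𝓢(ℝ, ℂ),
      ∫⁻ x, (∑ m, ‖conv f (phim φ (a m) (b m)) x‖ₑ ^ 2) ^ q ≤ C * ∫⁻ x, (‖f x‖ₑ ^ 2) ^ q := by
  obtain ⟨M, hM_top, hM⟩ := exists_forall_enorm_fourier_le φ
  obtain ⟨C₁, hC₁⟩ := exists_forall_norm_mul_le (SchwartzMap.derivCLM ℂ ℂ φ)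
  obtain ⟨C₂, hC₂⟩ := exists_forall_norm_mul_le (SchwartzMap.derivCLM ℂ ℂ (dilationDeriv φ))
  obtain rfl | hq := hq.eq_or_lt
  · refine ⟨M ^ 2, by finiteness, fun ι _ a b hab hdisj f ↦ ?_⟩
    simpa using lintegral_sum_enorm_sq_conv_phim_le hab hdisj hφ hM f
  have hq0 : 0 ≤ q := by positivity
  let K := 8 * M ^ 2 + ENNReal.ofReal (256 * π ^ 3 * max C₁ C₂ ^ 2)
  have hK : K ≠ ∞ := by finiteness
  have hosc {ι : Type u} [Fintype ι] {a b : ι → ℝ} (hab : ∀ m, a m < b m)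
      (hdisj : Pairwise (Disjoint on fun m ↦ Ioo (a m) (b m))) (f : 𝓢(ℝ, ℂ)) :
      MeanSqOscillationLE volume (rotPieces φ a b f)
        fun y ↦ K * maximalFunction volume (‖f ·‖ₑ ^ 2) y :=
    meanSqOscillationLE_rotPieces hab hdisj hφ hM (fun s ↦ (hC₁ s).trans (le_max_left C₁ C₂))
      (fun s ↦ (hC₂ s).trans (le_max_right C₁ C₂)) f
  refine ⟨2 * ((64 * (100 * 64 ^ q)) ^ q * K ^ q) *
    (10 * ENNReal.ofReal (q / (q - 1)) * 2 ^ (q - 1)), by finiteness, fun ι _ a b hab hdisj f ↦ ?_⟩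
  simp_rw [← enorm_sq_rotPieces]
  exact lintegral_enorm_sq_rotPieces_rpow_le hab (hosc hab hdisj f) hq

end SquareFunction

theorem statement9_general {φ : SchwartzMap ℝ ℂ} (hφ : support (𝓕 ⇑φ) ⊆ Ioo 0 1)
    {p : ℝ} (hp : 2 ≤ p) (k : ℕ) :
    ∃ C : ℝ, 0 < C ∧ ∀ (ι : Type*) [Fintype ι] (a b : ι → ℝ), (∀ m, a m < b m) →
      Pairwise (Disjoint on fun m ↦ Ioo (a m) (b m)) → ∀ f : SchwartzMap ℝ ℂ,
      (∫⁻ x, (((∑ m, ‖iteratedDeriv k (conv f (phim φ (a m) (b m))) x‖ₑ ^ 2) ^ (1 / 2 : ℝ)) ^ p))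
          ^ (1 / p) ≤
        ENNReal.ofReal C * (∫⁻ x, ‖iteratedDeriv k f x‖ₑ ^ p) ^ (1 / p) := by
  obtain ⟨C, hC, hbound⟩ :=
    exists_lintegral_sum_enorm_sq_conv_phim_rpow_le hφ (q := p / 2) (by linarith)
  have hp0 : 0 ≤ 1 / p := by positivity
  have hsqrt (y : ℝ≥0∞) : (y ^ (1 / 2 : ℝ)) ^ p = y ^ (p / 2) := by
    rw [← ENNReal.rpow_mul, one_div_mul_eq_div]
  have hsq (y : ℝ≥0∞) : (y ^ 2) ^ (p / 2) = y ^ p := by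
    rw [← ENNReal.rpow_ofNat, ← ENNReal.rpow_mul, mul_div_cancel₀ p two_ne_zero]
  refine ⟨(C ^ (1 / p)).toReal + 1, by positivity, fun ι _ a b hab hdisj f ↦ ?_⟩
  obtain ⟨g, hg⟩ := exists_schwartzMap_eq_iteratedDeriv k f
  have hconv (m : ι) :
      iteratedDeriv k (conv f (phim φ (a m) (b m))) = conv g (phim φ (a m) (b m)) := by
    obtain ⟨Φ, hΦ⟩ := exists_schwartzMap_eq_phim φ (hab m)
    rw [← hΦ, iteratedDeriv_conv, hg]
  have hle : C ^ (1 / p) ≤ ENNReal.ofReal ((C ^ (1 / p)).toReal + 1) :=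
    (ENNReal.ofReal_toReal (by finiteness)).ge.trans (ENNReal.ofReal_le_ofReal (by simp))
  simp_rw [hconv, hsqrt, ← hg]
  grw [hbound ι a b hab hdisj g, ENNReal.mul_rpow_of_nonneg _ _ hp0, hle]
  simp_rw [hsq, le_refl]

/-- uniform boundedness of the family without rotations on the homogeneous Sobolev
space `Ẇ^p_k = Ḟ^k_{p2}`: for `2 ≤ p < ∞` and `k ∈ ℕ`,
`‖(Σ_m |(f∗φ_m)^{(k)}|²)^{1/2}‖_{L^p} ≤ C ‖f^{(k)}‖_{L^p}`. -/
theorem statement9 (φ : SchwartzMap ℝ ℂ)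
    (hφ : Function.support (𝓕 ⇑φ) ⊆ Set.Ioo 0 1)
    (p : ℝ) (hp : 2 ≤ p) (k : ℕ) :
    ∃ C : ℝ, 0 < C ∧ ∀ (N : ℕ) (a b : Fin N → ℝ), Admissible a b →
      ∀ f : SchwartzMap ℝ ℂ,
        (∫⁻ x : ℝ, ((∑ m : Fin N,
            (‖iteratedDeriv k (conv ⇑f (phim ⇑φ (a m) (b m))) x‖₊ : ℝ≥0∞) ^ 2)
              ^ (1/2 : ℝ)) ^ p) ^ (1/p)
        ≤ ENNReal.ofReal C *
          (∫⁻ x : ℝ, (‖iteratedDeriv k ⇑f x‖₊ : ℝ≥0∞) ^ p) ^ (1/p) := by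
  obtain ⟨C, hC, hbound⟩ := statement9_general hφ hp k
  exact ⟨C, hC, fun N a b h ↦ hbound (Fin N) a b h.1 fun m m' hmm' ↦
    (h.2.2 m m' hmm').mono Ioo_subset_Icc_self Ioo_subset_Icc_self⟩
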